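/- arXiv:1805.03814 — 2 statements merged into one kernel-verified Lean document; each statement's English description precedes it below -/
import Mathlib

section
/- Let $(K,v)$ be a henselian valued field of equicharacteristic $0$ (that is, both $K$ and its residue field $Kv$ have characteristic $0$). Suppose the residue field $Kv$ is bounded, and that the value group $vK = v(K^\times)$ satisfies $[vK : n(vK)] < \infty$ for every positive integer $n$. Then $K$ is bounded. -/
universe u

/-- A field `K` is *bounded* if for every positive integer `n` it has only finitely many Galois
extensions of degree `n`, i.e. only finitely many intermediate fields `E` of a fixed algebraic
closure of `K` with `E/K` Galois of degree `n`. -/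
def IsBoundedField (K : Type u) [Field K] : Prop :=
  ∀ n : ℕ, 0 < n →
    {E : IntermediateField K (AlgebraicClosure K) |
      IsGalois K ↥E ∧ Module.finrank K ↥E = n}.Finite

/-!
Write `R` for the valuation ring of `v`, `k` for its residue field, `Ω` for an algebraic closure
of `K`, and fix the degree `n`. The aim is a single finite extension `M` of `K` containing every
Galois extension of `K` of degree `n`; as `M / K` is finite separable, it has only finitely many
intermediate fields.

*Extending the valuation.* Since `R` is henselian, its integral closure in `Ω` is local
(`isLocalRing_integralClosure`), and in fact a valuation ring `V`
(`exists_valuationSubring_iff_isIntegral`). Being defined by integrality, `V` is stable under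
`Gal(Ω / K)`. Let `w` be its valuation; conjugate elements have the same value, so
`w y ^ n = w (N y)` for `y` in a Galois extension of degree `n`.

*The field `M`.* Boundedness of `k` gives a finite extension of `k` inside the residue field of
`V` containing all residues of degree at most `n * n` over `k`. Adjoin to `K` lifts of a basis of
that extension, and an `n`-th root of one element of each value class modulo `n`. If `E / K` is
Galois of degree `n` and `0 ≠ y ∈ E`, some `c ∈ M` has `w c = w y` and `c ^ n ∈ K`. Then `u = y / c`
is a unit of `V` with `u ^ n ∈ E`, hence a root of a monic polynomial of degree at most `n * n`
over `R`, so its residue lifts to some `m ∈ M`, and `w (y - c * m) < w y` (`exists_approx`).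

*`E ≤ M`.* By this approximation every `σ ∈ Gal(Ω / M)` satisfies `w (σ y - y) < w y` for all
`0 ≠ y ∈ E`. This forces `σ` to fix `E`: for `x ∈ E` the element `y = n x - ∑ σ ^ i x` has trace
zero for the action of `σ`, so `n y = -∑ (σ ^ j y - y)` would have value `< w y` if `y ≠ 0`,
while `w n = 1` because `k` has characteristic zero
(`le_of_forall_exists_valuation_sub_lt`). Thus no explicit ramification theory is required.
-/

open Polynomial IsLocalRing
open scoped Pointwise

/-! ### The integral closure of a henselian ring is local -/

/-- If a finite group acts on a domain `B` with invariants `R` henselian, then `B` is local.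
The group permutes the maximal ideals of `B` transitively. If there were two of them, some `b`
fixed by the stabilizer of `p` would lie outside `p` but in all other conjugates of `p`. The
polynomial over `R` whose roots are the distinct conjugates of `b` then has, modulo the maximal
ideal, the residue of `b` as a simple root, and Hensel's lemma gives `b ∈ R`, which is absurd as
all maximal ideals of `B` have the same trace on `R`. -/
theorem isLocalRing_of_isInvariant {R B G : Type*} [CommRing R] [HenselianLocalRing R]
    [CommRing B] [IsDomain B] [Algebra R B] [Group G] [Finite G] [MulSemiringAction G B]
    [SMulCommClass G R B] [Algebra.IsInvariant R B G] : IsLocalRing B := by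
  classical
  cases nonempty_fintype G
  have hint : Algebra.IsIntegral R B := Algebra.IsInvariant.isIntegral R B G
  have hunder : ∀ q : Ideal B, q.IsMaximal → q.under R = maximalIdeal R := by
    intro q hq
    exact eq_maximalIdeal (Ideal.isMaximal_comap_of_isIntegral_of_isMaximal (R := R) q)
  obtain ⟨p, hp⟩ := Ideal.exists_maximal B
  refine IsLocalRing.of_unique_max_ideal ⟨p, hp, fun q hq => ?_⟩
  by_contra hqp
  obtain ⟨g₀, hg₀⟩ := Algebra.IsInvariant.exists_smul_of_under_eq R B G p q
    ((hunder p hp).trans (hunder q hq).symm)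
  have hmax : ∀ g : G, (g • p).IsMaximal := fun g => by
    have := Ideal.comap_isMaximal_of_equiv (MulSemiringAction.toRingEquiv G B g⁻¹) (p := p)
    convert this using 1
    ext x
    simp [Ideal.mem_pointwise_smul_iff_inv_smul_mem]
  -- Maximal ideals are incomparable, so each conjugate of `p` other than `p` contains an element
  -- outside `p`. The product of these elements over all `g` and then over the orbit under the
  -- stabilizer `H` of `p` is the required `b`.
  have hb : ∀ g : G, ∃ b : B, b ∉ p ∧ (g • p ≠ p → b ∈ g • p) := by
    intro g
    by_cases h : g • p = p
    · exact ⟨1, (Ideal.ne_top_iff_one p).mp hp.ne_top, fun h' => absurd h h'⟩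
    · have : ¬ g • p ≤ p := fun hle => h ((hmax g).eq_of_le hp.ne_top hle)
      obtain ⟨b, hb1, hb2⟩ := SetLike.not_le_iff_exists.mp this
      exact ⟨b, hb2, fun _ => hb1⟩
  choose c hcp hc using hb
  set H : Finset G := Finset.univ.filter fun h => h • p = p with hH
  set b : B := ∏ h ∈ H, h • ∏ g, c g with hbdef
  have hbp : b ∉ p := by
    rw [hbdef, Ideal.IsPrime.prod_mem_iff]
    rintro ⟨h, hh, hmem⟩
    rw [hH, Finset.mem_filter] at hh
    rw [← hh.2, Ideal.smul_mem_pointwise_smul_iff, Ideal.IsPrime.prod_mem_iff] at hmem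
    obtain ⟨g, -, hg⟩ := hmem
    exact hcp g hg
  have hbg : ∀ g : G, g • p ≠ p → b ∈ g • p := by
    intro g hg
    refine Ideal.mem_of_dvd _ ?_ (hc g hg)
    refine (Finset.dvd_prod_of_mem c (Finset.mem_univ g)).trans ?_
    have h1 : (1 : G) ∈ H := by simp [hH]
    simpa using Finset.dvd_prod_of_mem (fun h : G => h • ∏ g, c g) h1
  have hfix : ∀ g : G, g • p = p → g • b = b := by
    intro g hg
    rw [hbdef, Finset.smul_prod']
    refine Finset.prod_bij (fun h _ => g * h) ?_ ?_ ?_ ?_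
    · intro h hh
      simp only [hH, Finset.mem_filter, Finset.mem_univ, true_and] at hh ⊢
      rw [mul_smul, hh, hg]
    · intro h _ h' _ e
      exact mul_left_cancel e
    · intro h hh
      refine ⟨g⁻¹ * h, ?_, by simp⟩
      simp only [hH, Finset.mem_filter, Finset.mem_univ, true_and] at hh ⊢
      rw [mul_smul, hh, inv_smul_eq_iff, hg]
    · intro h _
      rw [mul_smul]
  -- the conjugates of `b` other than `b` itself lie in `p`
  set S : Finset B := Finset.univ.image fun g : G => g • b with hS
  have hbS : b ∈ S := by
    rw [hS, Finset.mem_image]; exact ⟨1, Finset.mem_univ _, one_smul _ _⟩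
  have hSp : ∀ y ∈ S, y ≠ b → y ∈ p := by
    intro y hy hyb
    obtain ⟨g, -, rfl⟩ := Finset.mem_image.mp hy
    have h1 : g⁻¹ • p ≠ p := fun h => hyb (hfix g (by rw [inv_smul_eq_iff] at h; exact h.symm))
    have := hbg _ h1
    rwa [Ideal.mem_inv_pointwise_smul_iff] at this
  have hSg : ∀ g : G, S.image (fun y => g • y) = S := by
    intro g
    refine Finset.eq_of_subset_of_card_le ?_ ?_
    · intro y hy
      simp only [hS, Finset.mem_image, Finset.mem_univ, true_and] at hy ⊢
      obtain ⟨_, ⟨h, rfl⟩, rfl⟩ := hy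
      exact ⟨g * h, mul_smul _ _ _⟩
    · rw [Finset.card_image_of_injective _ (MulAction.injective g)]
  -- The sum `s` of the conjugates of `b` lies in `R` and is congruent to `b` modulo `p`: it is the
  -- approximate root to which Hensel's lemma is applied.
  obtain ⟨s, hs⟩ : ∃ s : R, algebraMap R B s = ∑ y ∈ S, y := by
    refine Algebra.IsInvariant.isInvariant (G := G) _ fun g => ?_
    rw [Finset.smul_sum]
    conv_rhs => rw [← hSg g]
    rw [Finset.sum_image (fun _ _ _ _ h => MulAction.injective g h)]
  obtain ⟨f, hf, -, hfm⟩ : ∃ f : R[X], f.map (algebraMap R B) = ∏ y ∈ S, (X - C y) ∧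
      f.natDegree = (∏ y ∈ S, (X - C y)).natDegree ∧ f.Monic := by
    refine Polynomial.lifts_and_natDegree_eq_and_monic ?_ (monic_prod_X_sub_C _ _)
    rw [Polynomial.lifts_iff_coeff_lifts]
    intro n
    refine Algebra.IsInvariant.isInvariant (G := G) _ fun g => ?_
    rw [← Polynomial.coeff_smul, Finset.smul_prod']
    congr 1
    conv_rhs => rw [← hSg g]
    rw [Finset.prod_image (fun _ _ _ _ h => MulAction.injective g h)]
    simp [smul_sub]
  have hmem : ∀ r : R, r ∈ maximalIdeal R ↔ algebraMap R B r ∈ p := by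
    intro r; rw [← hunder p hp]; rfl
  have hsb : (∑ y ∈ S, y) - b ∈ p := by
    rw [← Finset.add_sum_erase S _ hbS, add_sub_cancel_left]
    exact Ideal.sum_mem _ fun y hy =>
      hSp y (Finset.mem_of_mem_erase hy) (Finset.ne_of_mem_erase hy)
  have hev : ∀ r : R, algebraMap R B (f.eval r) = ∏ y ∈ S, (algebraMap R B r - y) := by
    intro r
    rw [← Polynomial.eval_map_apply, hf, Polynomial.eval_prod]
    simp
  obtain ⟨a, ha, -⟩ := HenselianLocalRing.is_henselian f hfm s
    (by
      rw [hmem, hev, hs]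
      exact Ideal.mem_of_dvd _ (Finset.dvd_prod_of_mem (fun y => (∑ y ∈ S, y) - y) hbS) hsb)
    (by
      rw [← IsLocalRing.notMem_maximalIdeal, hmem, ← Polynomial.eval_map_apply,
        ← Polynomial.derivative_map, hf, ← Finset.mul_prod_erase S _ hbS, hs]
      simp only [derivative_mul, derivative_sub, derivative_X, derivative_C, sub_zero, one_mul,
        eval_add, eval_mul, eval_sub, eval_X, eval_C]
      rw [Ideal.add_mem_iff_left _ (Ideal.mul_mem_right _ _ hsb), eval_prod,
        Ideal.IsPrime.prod_mem_iff]
      rintro ⟨y, hy, hyp⟩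
      simp only [eval_sub, eval_X, eval_C] at hyp
      have h1 := hSp y (Finset.mem_of_mem_erase hy) (Finset.ne_of_mem_erase hy)
      apply hbp
      have := p.sub_mem (p.add_mem hyp h1) hsb
      simpa using this)
  -- The root `a ∈ R` is a conjugate of `b`, hence equal to `b`, since `a` is invariant.
  have hab : algebraMap R B a = b := by
    have h0 := hev a
    rw [ha.eq_zero, map_zero] at h0
    obtain ⟨y, hy, hy0⟩ := Finset.prod_eq_zero_iff.mp h0.symm
    obtain ⟨g, -, rfl⟩ := Finset.mem_image.mp hy
    rw [sub_eq_zero, ← inv_smul_eq_iff, smul_algebraMap] at hy0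
    exact hy0
  apply hbp
  have h1 : b ∈ q := hg₀ ▸ hbg g₀ (fun h => hqp (hg₀.trans h))
  rw [← hab, ← hmem, ← hunder q hq]
  rw [← hab] at h1
  exact h1

theorem isLocalRing_integralClosure_of_isGalois (R K L : Type*) [CommRing R] [HenselianLocalRing R]
    [IsIntegrallyClosed R] [Field K] [Field L] [Algebra R K] [IsFractionRing R K]
    [Algebra K L] [Algebra R L] [IsScalarTower R K L] [FiniteDimensional K L] [IsGalois K L] :
    IsLocalRing (integralClosure R L) := by
  have : IsDomain R := (IsFractionRing.injective R K).isDomain _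
  have : IsFractionRing (integralClosure R L) L :=
    integralClosure.isFractionRing_of_finite_extension K L
  have := Algebra.isInvariant_of_isGalois' R K L (integralClosure R L)
  have : Finite (integralClosure R L ≃ₐ[R] integralClosure R L) :=
    Finite.of_equiv _ (galRestrict R K L (integralClosure R L)).toEquiv
  exact isLocalRing_of_isInvariant (R := R) (G := integralClosure R L ≃ₐ[R] integralClosure R L)

/-- The integral closure of a henselian normal domain in an infinite Galois extension is local,
because each of its elements lies in a finite Galois subextension. -/
theorem isLocalRing_integralClosure (R K Ω : Type*) [CommRing R] [HenselianLocalRing R]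
    [IsIntegrallyClosed R] [Field K] [Field Ω] [Algebra R K] [IsFractionRing R K]
    [Algebra K Ω] [Algebra R Ω] [IsScalarTower R K Ω] [IsGalois K Ω] :
    IsLocalRing (integralClosure R Ω) := by
  refine IsLocalRing.of_isUnit_or_isUnit_one_sub_self fun b => ?_
  let L := FiniteGaloisIntermediateField.adjoin K {(b : Ω)}
  have hbL : (b : Ω) ∈ L.toIntermediateField :=
    FiniteGaloisIntermediateField.subset_adjoin K _ rfl
  have : IsLocalRing (integralClosure R L.toIntermediateField) :=
    isLocalRing_integralClosure_of_isGalois R K L.toIntermediateField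
  let ι : L.toIntermediateField →ₐ[R] Ω := L.toIntermediateField.val.restrictScalars R
  let φ : integralClosure R L.toIntermediateField →+* integralClosure R Ω :=
    (ι.mapIntegralClosure).toRingHom
  have hbi : IsIntegral R (⟨b, hbL⟩ : L.toIntermediateField) := by
    rw [← isIntegral_algHom_iff ι (RingHom.injective _)]
    exact b.2
  have hφ : φ ⟨⟨b, hbL⟩, hbi⟩ = b := rfl
  rcases IsLocalRing.isUnit_or_isUnit_one_sub_self
    (⟨⟨b, hbL⟩, hbi⟩ : integralClosure R L.toIntermediateField) with h | h
  · left
    have := h.map φ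
    rwa [hφ] at this
  · right
    have := h.map φ
    rwa [map_sub, map_one, hφ] at this

/-! ### The integral closure of a henselian valuation ring is a valuation ring -/

/-- Over a valuation ring, a nonzero polynomial is a constant times one with a unit coefficient:
divide by a coefficient of largest valuation. -/
theorem exists_coeff_dvd {R : Type*} [CommRing R] [IsDomain R] [ValuationRing R] {f : R[X]}
    (hf : f ≠ 0) : ∃ g : R[X], ∃ c : R, c ≠ 0 ∧ f = C c * g ∧ ∃ i, IsUnit (g.coeff i) := by
  obtain ⟨i, hi, hmax⟩ := Finset.exists_max_image f.support
    (fun i => ValuationRing.valuation R (FractionRing R) (algebraMap R _ (f.coeff i)))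
    (Polynomial.support_nonempty.mpr hf)
  have hdvd : C (f.coeff i) ∣ f := by
    rw [Polynomial.C_dvd_iff_dvd_coeff]
    intro j
    by_cases hj : j ∈ f.support
    · have hle := hmax j hj
      obtain ⟨c, hc⟩ : ∃ c : R, c • algebraMap R (FractionRing R) (f.coeff i) =
        algebraMap R (FractionRing R) (f.coeff j) := hle
      refine ⟨c, IsFractionRing.injective R (FractionRing R) ?_⟩
      rw [← hc, Algebra.smul_def, map_mul, mul_comm]
    · rw [Polynomial.notMem_support_iff.mp hj]; exact dvd_zero _
  obtain ⟨g, hg⟩ := hdvd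
  have hi0 := Polynomial.mem_support_iff.mp hi
  refine ⟨g, f.coeff i, hi0, hg, i, ?_⟩
  have : f.coeff i = f.coeff i * g.coeff i := by
    conv_lhs => rw [hg]
    rw [Polynomial.coeff_C_mul]
  exact (mul_eq_left₀ hi0).mp this.symm ▸ isUnit_one

/-- The integral closure of a henselian valuation ring in a Galois extension of its fraction field
is a valuation ring. It is local, hence dominated by a valuation ring `V`. An element `z ∈ V` is
a root of some `∑ aⱼ zʲ` over `R` with a unit coefficient; if `i` is the largest index of
such a coefficient and `b = ∑_{j ≥ i} aⱼ z ^ (j - i)`, then `b` and `z b` are integral, and `b` is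
a unit of `V`, hence of the integral closure, so `z = z b * b⁻¹` is integral. -/
theorem exists_valuationSubring_iff_isIntegral (R K Ω : Type*) [CommRing R] [HenselianLocalRing R]
    [IsDomain R] [ValuationRing R] [Field K] [Field Ω] [Algebra R K] [IsFractionRing R K]
    [Algebra K Ω] [Algebra R Ω] [IsScalarTower R K Ω] [IsGalois K Ω] :
    ∃ V : ValuationSubring Ω, ∀ z, z ∈ V ↔ IsIntegral R z := by
  classical
  have hloc := isLocalRing_integralClosure R K Ω
  have hinj : Function.Injective (algebraMap R Ω) := by
    rw [IsScalarTower.algebraMap_eq R K Ω]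
    exact (algebraMap K Ω).injective.comp (IsFractionRing.injective R K)
  have : FaithfulSMul R Ω := (faithfulSMul_iff_algebraMap_injective R Ω).mpr hinj
  have : FaithfulSMul R (integralClosure R Ω) := by
    rw [faithfulSMul_iff_algebraMap_injective]
    intro x y h
    exact hinj (congrArg (fun t : integralClosure R Ω => (t : Ω)) h)
  let B : LocalSubring Ω := @LocalSubring.mk _ _ (integralClosure R Ω).toSubring hloc
  have hB : ∀ z, z ∈ B.toSubring ↔ IsIntegral R z := fun z => Iff.rfl
  obtain ⟨V, hBV⟩ := B.exists_le_valuationSubring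
  have hBV1 : ∀ z, IsIntegral R z → z ∈ V := fun z hz => hBV.1 hz
  have hunit : ∀ z, IsIntegral R z → V.valuation z = 1 → IsIntegral R z⁻¹ := by
    intro z hz hz1
    have hu : IsUnit (Subring.inclusion hBV.1 (⟨z, hz⟩ : B.toSubring)) := by
      have := V.valuation_eq_one_iff ⟨z, hBV1 z hz⟩
      exact this.mpr hz1
    have := hBV.2.1 _ hu
    obtain ⟨w, hw⟩ := isUnit_iff_exists_inv.mp this
    have hw' : z * (w : Ω) = 1 := congrArg Subtype.val hw
    rw [inv_eq_of_mul_eq_one_right hw']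
    exact w.2
  have hV1 : ∀ r : R, V.valuation (algebraMap R Ω r) ≤ 1 := fun r =>
    (V.valuation_le_one_iff _).mpr (hBV1 _ isIntegral_algebraMap)
  have hVu : ∀ r : R, V.valuation (algebraMap R Ω r) = 1 ↔ IsUnit r := by
    intro r
    refine ⟨fun h => ?_, fun h => ?_⟩
    · have h1 : algebraMap R Ω r ≠ 0 := fun h0 => by simp [h0] at h
      have h2 := hunit _ isIntegral_algebraMap h
      have h3 : IsUnit (algebraMap R (integralClosure R Ω) r) :=
        isUnit_iff_exists_inv.mpr ⟨⟨_, h2⟩, Subtype.ext (mul_inv_cancel₀ h1)⟩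
      exact isUnit_of_map_unit (algebraMap R (integralClosure R Ω)) r h3
    · obtain ⟨u, rfl⟩ := h
      refine le_antisymm (hV1 _) ?_
      have h1 := hV1 (↑u⁻¹ : R)
      calc (1 : V.ValueGroup) = V.valuation (algebraMap R Ω (↑u * ↑u⁻¹)) := by simp
        _ ≤ V.valuation (algebraMap R Ω ↑u) * 1 := by
          rw [map_mul, map_mul]; exact mul_le_mul_right h1 _
        _ = _ := mul_one _
  refine ⟨V, fun z => ⟨fun hz => ?_, hBV1 z⟩⟩
  rcases eq_or_ne z 0 with rfl | hz0
  · exact isIntegral_zero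
  -- a relation over `R` for `z` with at least one unit coefficient
  obtain ⟨g, hgz, hgu⟩ : ∃ g : R[X], aeval z g = 0 ∧ ∃ i, IsUnit (g.coeff i) := by
    have halg : IsAlgebraic R z :=
      (IsFractionRing.isAlgebraic_iff R K Ω).mpr (Algebra.IsAlgebraic.isAlgebraic z)
    obtain ⟨f, hf0, hfz⟩ := halg
    obtain ⟨g, c, hc, rfl, hu⟩ := exists_coeff_dvd hf0
    refine ⟨g, ?_, hu⟩
    rw [map_mul, aeval_C, mul_eq_zero] at hfz
    exact hfz.resolve_left fun h => hc (hinj (h.trans (map_zero _).symm))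
  -- the largest index of a unit coefficient
  obtain ⟨i, hiu, hin, himax⟩ : ∃ i, IsUnit (g.coeff i) ∧ i ≤ g.natDegree ∧
      ∀ j, i < j → ¬ IsUnit (g.coeff j) := by
    have hle : ∀ j, IsUnit (g.coeff j) → j ≤ g.natDegree := fun j hj =>
      le_natDegree_of_ne_zero hj.ne_zero
    obtain ⟨i₀, hi₀⟩ := hgu
    refine ⟨Nat.findGreatest (fun j => IsUnit (g.coeff j)) g.natDegree,
      Nat.findGreatest_spec (P := fun j => IsUnit (g.coeff j)) (hle _ hi₀) hi₀,
      Nat.findGreatest_le _, fun j hj hju => ?_⟩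
    exact absurd (Nat.le_findGreatest (P := fun j => IsUnit (g.coeff j)) (hle j hju) hju)
      (not_le.mpr hj)
  obtain ⟨N, hN⟩ : ∃ N, g.natDegree + 1 = i + (N + 1) := ⟨g.natDegree - i, by omega⟩
  set a : ℕ → Ω := fun j => algebraMap R Ω (g.coeff j) with ha
  set b : Ω := ∑ k ∈ Finset.range (N + 1), a (i + k) * z ^ k with hb
  have hsum : ∑ j ∈ Finset.range i, a j * z ^ j + z ^ i * b = 0 := by
    rw [← hgz, aeval_eq_sum_range, hN, Finset.sum_range_add, hb, Finset.mul_sum]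
    congr 1
    · exact Finset.sum_congr rfl fun j _ => (Algebra.smul_def _ _).symm
    · refine Finset.sum_congr rfl fun j _ => ?_
      rw [Algebra.smul_def, pow_add]; ring
  -- Dividing the relation by `z ^ i` expresses `b` and `z * b` as polynomials in `z⁻¹`.
  have hb1 : b = - ∑ j ∈ Finset.range i, a j * z⁻¹ ^ (i - j) := by
    have : z ^ i * b = z ^ i * (- ∑ j ∈ Finset.range i, a j * z⁻¹ ^ (i - j)) := by
      rw [eq_neg_of_add_eq_zero_right hsum, mul_neg, Finset.mul_sum]
      congr 1
      refine Finset.sum_congr rfl fun j hj => ?_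
      have : i = (i - j) + j := by have := Finset.mem_range.mp hj; omega
      conv_rhs => rw [this, pow_add]
      rw [Nat.add_sub_cancel, inv_pow]
      field_simp
    exact mul_left_cancel₀ (pow_ne_zero _ hz0) this
  have hzb : z * b = - ∑ j ∈ Finset.range i, a j * z⁻¹ ^ (i - j - 1) := by
    rw [hb1, mul_neg, Finset.mul_sum]
    congr 1
    refine Finset.sum_congr rfl fun j hj => ?_
    have : i - j = (i - j - 1) + 1 := by have := Finset.mem_range.mp hj; omega
    conv_lhs => rw [this, pow_succ]
    field_simp
  -- both `b` and `z * b` lie in every valuation ring of `Ω` containing the integral closure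
  have hboth : ∀ x, x = b ∨ x = z * b → IsIntegral R x := by
    intro x hx
    by_contra hxR
    obtain ⟨W, hW, hxW⟩ := Subring.exists_le_valuationSubring_of_isIntegrallyClosedIn
      (R := (integralClosure R Ω).toSubring) hxR
    have haW : ∀ j, a j ∈ W := fun j => hW (isIntegral_algebraMap (R := R))
    apply hxW
    rcases W.mem_or_inv_mem z with h | h
    · have hbW : b ∈ W := sum_mem fun k _ => mul_mem (haW _) (pow_mem h k)
      rcases hx with rfl | rfl
      · exact hbW
      · exact mul_mem h hbW
    · rcases hx with rfl | rfl
      · rw [hb1]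
        exact neg_mem (sum_mem fun j _ => mul_mem (haW _) (pow_mem h _))
      · rw [hzb]
        exact neg_mem (sum_mem fun j _ => mul_mem (haW _) (pow_mem h _))
  -- The term `k = 0` of `b` is a unit and all the others lie in the maximal ideal of `V`.
  have hbu : V.valuation b = 1 := by
    rw [hb, Finset.sum_range_succ', pow_zero, mul_one, add_zero, add_comm,
      Valuation.map_add_eq_of_lt_left]
    · exact (hVu _).mpr hiu
    · rw [(hVu _).mpr hiu]
      refine Valuation.map_sum_lt _ one_ne_zero fun k _ => ?_
      rw [map_mul, map_pow]
      have h1 : V.valuation (a (i + (k + 1))) < 1 :=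
        lt_of_le_of_ne (hV1 _) fun h => himax _ (by omega) ((hVu _).mp h)
      exact mul_lt_one_of_lt_of_le h1 (pow_le_one' ((V.valuation_le_one_iff z).mpr hz) _)
  have hb0 : b ≠ 0 := fun h => by simp [h] at hbu
  have : z = (z * b) * b⁻¹ := by field_simp
  rw [this]
  exact (hboth _ (Or.inr rfl)).mul (hunit b (hboth _ (Or.inl rfl)) hbu)

/-! ### Bounded residue field -/

/-- Over a bounded field, all elements of degree at most `N` in an algebraic extension lie in a
common finite subextension: the splitting field of a polynomial of degree at most `N` is Galois
of degree at most `N !`, so only finitely many such fields occur. -/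
theorem exists_finiteDimensional_of_isBoundedField {k k' : Type*} [Field k] [Field k']
    [Algebra k k'] [Algebra.IsAlgebraic k k'] [CharZero k] (hk : IsBoundedField k) (N : ℕ) :
    ∃ F : IntermediateField k k', FiniteDimensional k F ∧
      ∀ t : k', (minpoly k t).natDegree ≤ N → t ∈ F := by
  classical
  let φ : k' →ₐ[k] AlgebraicClosure k := IsAlgClosed.lift
  let 𝓔 : Set (IntermediateField k (AlgebraicClosure k)) :=
    ⋃ d ∈ Finset.Icc 1 N.factorial, {E | IsGalois k E ∧ Module.finrank k E = d}
  have h𝓔 : 𝓔.Finite := Set.Finite.biUnion (Finset.finite_toSet _) fun d hd =>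
    hk d (Finset.mem_Icc.mp hd).1
  have : Finite 𝓔 := h𝓔
  let F' : IntermediateField k (AlgebraicClosure k) := ⨆ E : 𝓔, E.1
  have hfd : ∀ E : 𝓔, FiniteDimensional k E.1 := by
    rintro ⟨E, hE⟩
    simp only [𝓔, Set.mem_iUnion, Finset.mem_Icc] at hE
    obtain ⟨d, hd, -, hE⟩ := hE
    exact Module.finite_of_finrank_pos (by rw [hE]; exact hd.1)
  have hF' : FiniteDimensional k F' := IntermediateField.finiteDimensional_iSup_of_finite
  refine ⟨F'.comap φ, ?_, fun t ht => ?_⟩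
  · let ψ : F'.comap φ →ₗ[k] F' :=
      (φ.toLinearMap.comp (F'.comap φ).val.toLinearMap).codRestrict
        F'.toSubalgebra.toSubmodule (fun x => x.2)
    refine FiniteDimensional.of_injective ψ fun x y h => ?_
    have h1 : φ x = φ y := congrArg (fun z : F' => (z : AlgebraicClosure k)) h
    exact Subtype.ext (φ.injective h1)
  · have hti : IsIntegral k t := Algebra.IsIntegral.isIntegral t
    set p := minpoly k t with hp
    have hp0 : p ≠ 0 := minpoly.ne_zero hti
    have hsep : p.Separable := (minpoly.irreducible hti).separable
    have hspl : (p.map (algebraMap k (AlgebraicClosure k))).Splits :=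
      IsAlgClosed.splits _
    let E : IntermediateField k (AlgebraicClosure k) :=
      IntermediateField.adjoin k (p.rootSet (AlgebraicClosure k))
    have hE : p.IsSplittingField k E := IntermediateField.adjoin_rootSet_isSplittingField hspl
    have hgal : IsGalois k E := IsGalois.of_separable_splitting_field hsep
    have hEfd : FiniteDimensional k E := IsSplittingField.finiteDimensional E p
    have hdeg : Module.finrank k E ≤ N.factorial := by
      rw [(IsSplittingField.algEquiv E p).toLinearEquiv.finrank_eq,
        ← Gal.card_of_separable hsep]
      have : Fact ((p.map (algebraMap k (AlgebraicClosure k))).Splits) := ⟨hspl⟩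
      refine (Nat.card_le_card_of_injective _
        (Gal.galActionHom_injective p (AlgebraicClosure k))).trans ?_
      rw [Nat.card_eq_fintype_card, Fintype.card_perm, Polynomial.card_rootSet_eq_natDegree hsep hspl]
      exact Nat.factorial_le ht
    have hmem : E ∈ 𝓔 := by
      simp only [𝓔, Set.mem_iUnion, Finset.mem_Icc]
      exact ⟨_, ⟨Module.finrank_pos, hdeg⟩, hgal, rfl⟩
    have hle : E ≤ F' := le_iSup (fun E : 𝓔 => E.1) ⟨E, hmem⟩
    change φ t ∈ F'
    refine hle (IntermediateField.subset_adjoin k _ ?_)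
    rw [Polynomial.mem_rootSet]
    exact ⟨hp0, by rw [aeval_algHom_apply, hp, minpoly.aeval, map_zero]⟩

/-- There is a finite set `T` such that any extension of `K` containing `T` realizes the residues
of all roots of monic polynomials over `R` of degree at most `N`. The set `T` lifts a basis of a
finite extension of the residue field of `R` containing all residues of degree at most `N`. -/
theorem exists_finite_residue_lifts {R K Ω : Type*} [CommRing R] [IsLocalRing R]
    [Field K] [Field Ω] [Algebra R K] [IsFractionRing R K]
    [Algebra K Ω] [Algebra R Ω] [IsScalarTower R K Ω] (V : ValuationSubring Ω)
    (hV : ∀ z, z ∈ V ↔ IsIntegral R z) [CharZero (ResidueField R)]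
    (hbdd : IsBoundedField (ResidueField R)) (N : ℕ) :
    ∃ T : Set Ω, T.Finite ∧ ∀ M : IntermediateField K Ω, T ⊆ M → ∀ (u : Ω) (q : R[X]), q.Monic →
      q.natDegree ≤ N → aeval u q = 0 → ∃ m ∈ M, V.valuation (u - m) < 1 := by
  classical
  have hinj : Function.Injective (algebraMap R Ω) := by
    rw [IsScalarTower.algebraMap_eq R K Ω]
    exact (algebraMap K Ω).injective.comp (IsFractionRing.injective R K)
  let _ : Algebra R V := ((algebraMap R Ω).codRestrict V.toSubring
    fun r => (hV _).mpr isIntegral_algebraMap).toAlgebra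
  have hcoe : ∀ r : R, ((algebraMap R V r : V) : Ω) = algebraMap R Ω r := fun _ => rfl
  have : IsScalarTower R V Ω := IsScalarTower.of_algebraMap_eq fun r => rfl
  have : FaithfulSMul R V := by
    rw [faithfulSMul_iff_algebraMap_injective]
    exact fun x y h => hinj (congrArg (fun t : V => (t : Ω)) h)
  have : Algebra.IsIntegral R V := ⟨fun z => by
    rw [← isIntegral_algebraMap_iff (B := Ω) (Subtype.val_injective)]
    exact (hV _).mp z.2⟩
  have hroot : ∀ (u : V) (q : R[X]), aeval u q = 0 →
      aeval (residue V u) (q.map (residue R)) = 0 := by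
    intro u q hq
    rw [aeval_def, eval₂_map]
    have : (algebraMap (ResidueField R) (ResidueField V)).comp (residue R) =
        (residue V).comp (algebraMap R V) := rfl
    rw [this, ← hom_eval₂, ← aeval_def, hq, map_zero]
  have : Algebra.IsAlgebraic (ResidueField R) (ResidueField V) := ⟨fun t => by
    obtain ⟨u, rfl⟩ := residue_surjective t
    obtain ⟨q, hqm, hq⟩ := Algebra.IsIntegral.isIntegral (R := R) u
    exact ⟨q.map (residue R), (hqm.map _).ne_zero, hroot u q hq⟩⟩
  obtain ⟨F, hF, hFN⟩ := exists_finiteDimensional_of_isBoundedField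
    (k' := ResidueField V) hbdd N
  let b := Module.finBasis (ResidueField R) F
  choose τ hτ using fun i => residue_surjective (R := V) (b i : ResidueField V)
  refine ⟨Set.range fun i => (τ i : Ω), Set.finite_range _, fun M hM u q hqm hqN hqu => ?_⟩
  have hu : u ∈ V := (hV u).mpr ⟨q, hqm, hqu⟩
  have hqu' : aeval (⟨u, hu⟩ : V) q = 0 := by
    apply Subtype.val_injective (p := fun x => x ∈ V)
    have := aeval_algebraMap_apply Ω (⟨u, hu⟩ : V) q
    exact this.symm.trans hqu
  have huF : residue V ⟨u, hu⟩ ∈ F := by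
    refine hFN _ (le_trans ?_ hqN)
    rw [← hqm.natDegree_map (residue R)]
    exact natDegree_le_of_dvd (minpoly.dvd _ _ (hroot _ _ hqu')) (hqm.map _).ne_zero
  choose ρ hρ using fun i => residue_surjective (R := R) (b.repr ⟨_, huF⟩ i)
  let m : V := ∑ i, algebraMap R V (ρ i) * τ i
  have hm : residue V m = residue V ⟨u, hu⟩ := by
    have h1 := congrArg (fun t : F => (t : ResidueField V)) (b.sum_repr ⟨_, huF⟩)
    simp only [IntermediateField.coe_sum, IntermediateField.coe_smul] at h1
    rw [← h1, map_sum]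
    refine Finset.sum_congr rfl fun i _ => ?_
    rw [map_mul, hτ, Algebra.smul_def, ← hρ, ResidueField.algebraMap_residue]
  refine ⟨m, ?_, ?_⟩
  · have : (m : Ω) = ∑ i, algebraMap R Ω (ρ i) * τ i := by
      simp only [m]
      rw [← ValuationSubring.subtype_apply, map_sum]
      rfl
    rw [this]
    refine sum_mem fun i _ => mul_mem ?_ (hM ⟨i, rfl⟩)
    rw [IsScalarTower.algebraMap_apply R K Ω]
    exact M.algebraMap_mem _
  · have h1 : (⟨u, hu⟩ - m : V) ∈ maximalIdeal V := by
      rw [← residue_eq_zero_iff, map_sub, hm, sub_self]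
    exact (V.valuation_lt_one_iff _).mp h1

/-! ### Galois conjugation and the valuation -/

section Conjugation

variable {R K Ω : Type*} [CommRing R] [Field K] [Field Ω] [Algebra R K] [Algebra K Ω]
  [Algebra R Ω] [IsScalarTower R K Ω] {V : ValuationSubring Ω}

theorem valuation_algEquiv_le (hV : ∀ z, z ∈ V ↔ IsIntegral R z) (σ : Ω ≃ₐ[K] Ω) {a b : Ω}
    (h : V.valuation a ≤ V.valuation b) : V.valuation (σ a) ≤ V.valuation (σ b) := by
  rcases eq_or_ne b 0 with rfl | hb
  · have ha : a = 0 := by simpa using h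
    simp [ha]
  · have hb' : σ b ≠ 0 := by simpa using hb
    have h1 : V.valuation (a / b) ≤ 1 := by
      rw [map_div₀]
      exact div_le_one_of_le₀ h zero_le
    rw [V.valuation_le_one_iff, hV] at h1
    have h2 : IsIntegral R (σ (a / b)) := h1.map (σ.toAlgHom.restrictScalars R)
    rw [← hV, ← V.valuation_le_one_iff, map_div₀, map_div₀] at h2
    exact (div_le_one₀ (zero_lt_iff.mpr (by simpa using hb'))).mp h2

theorem valuation_algEquiv_lt (hV : ∀ z, z ∈ V ↔ IsIntegral R z) (σ : Ω ≃ₐ[K] Ω) {a b : Ω}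
    (h : V.valuation a < V.valuation b) : V.valuation (σ a) < V.valuation (σ b) := by
  contrapose! h
  simpa using valuation_algEquiv_le hV σ.symm h

/-- If `σ y` had a value different from that of `y`, the values of `y, σ y, σ² y, …` would be
strictly monotone, contradicting `σ ^ N y = y`. -/
theorem valuation_algEquiv_eq (hV : ∀ z, z ∈ V ↔ IsIntegral R z) (σ : Ω ≃ₐ[K] Ω) {y : Ω} {N : ℕ}
    (hN : 0 < N) (hy : (σ ^ N) y = y) : V.valuation (σ y) = V.valuation y := by
  obtain ⟨N, rfl⟩ : ∃ k, N = k + 1 := ⟨N - 1, by omega⟩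
  have hs : ∀ j, σ ((σ ^ j) y) = (σ ^ (j + 1)) y := fun j => by rw [pow_succ']; rfl
  rcases le_total (V.valuation (σ y)) (V.valuation y) with h | h
  · refine le_antisymm h ?_
    have : ∀ j, V.valuation ((σ ^ (j + 1)) y) ≤ V.valuation (σ y) := by
      intro j
      induction j with
      | zero => simp
      | succ j ih =>
        rw [← hs]
        exact valuation_algEquiv_le hV σ (ih.trans h)
    simpa [hy] using this N
  · refine le_antisymm ?_ h
    have : ∀ j, V.valuation (σ y) ≤ V.valuation ((σ ^ (j + 1)) y) := by
      intro j
      induction j with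
      | zero => simp
      | succ j ih =>
        rw [← hs]
        exact valuation_algEquiv_le hV σ (h.trans ih)
    simpa [hy] using this N

/-- An automorphism inducing `τ` on a Galois extension `E` satisfies `σ ^ [E : K] = 1` on `E`, as
the order of `τ` divides the order of the Galois group. -/
theorem pow_finrank_apply {E : IntermediateField K Ω} [FiniteDimensional K E] [IsGalois K E]
    (σ : Ω ≃ₐ[K] Ω) (τ : E ≃ₐ[K] E) (hστ : ∀ x : E, σ x = τ x) (x : E) :
    (σ ^ Module.finrank K E) x = x := by
  have h : ∀ j, (σ ^ j) (x : Ω) = ((τ ^ j) x : E) := by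
    intro j
    induction j with
    | zero => simp
    | succ j ih =>
      rw [pow_succ', pow_succ', AlgEquiv.mul_apply, ih, hστ]
      rfl
  rw [h, ← IsGalois.card_aut_eq_finrank, pow_card_eq_one']
  rfl

theorem valuation_norm [Normal K Ω] (hV : ∀ z, z ∈ V ↔ IsIntegral R z)
    {E : IntermediateField K Ω} [FiniteDimensional K E] [IsGalois K E] (y : E) :
    V.valuation (algebraMap K Ω (Algebra.norm K y)) =
      V.valuation (y : Ω) ^ Module.finrank K E := by
  have h1 : algebraMap K Ω (Algebra.norm K y) = ∏ τ : E ≃ₐ[K] E, ((τ y : E) : Ω) := by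
    rw [IsScalarTower.algebraMap_apply K E Ω, Algebra.norm_eq_prod_automorphisms, map_prod]
    rfl
  have h2 : ∀ τ : E ≃ₐ[K] E, V.valuation ((τ y : E) : Ω) = V.valuation (y : Ω) := by
    intro τ
    have hc : ∀ x : E, τ.liftNormal Ω x = τ x := fun x => τ.liftNormal_commutes Ω x
    rw [← hc]
    exact valuation_algEquiv_eq hV _ (Module.finrank_pos (R := K) (M := E))
      (pow_finrank_apply _ τ hc y)
  rw [h1, map_prod, Finset.prod_congr rfl fun τ _ => h2 τ, Finset.prod_const, Finset.card_univ,
    ← Nat.card_eq_fintype_card, IsGalois.card_aut_eq_finrank]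

/-- Suppose `[E : K]` is a unit for the valuation and every nonzero `y ∈ E` is congruent to an
element of `M` up to smaller value. Then any `σ` fixing `M` moves each nonzero `y ∈ E` by an amount
of value smaller than that of `y`. An element `y` of trace zero under `σ` must
then vanish, as `n * y = -∑ (σ ^ j y - y)`. Applied to `n * x - ∑ σ ^ i x`, this shows that `σ` fixes
every `x ∈ E`, and Galois theory gives `E ≤ M`. -/
theorem le_of_forall_exists_valuation_sub_lt [IsGalois K Ω]
    (hV : ∀ z, z ∈ V ↔ IsIntegral R z) {M E : IntermediateField K Ω}
    [FiniteDimensional K E] [IsGalois K E]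
    (hn : V.valuation (Module.finrank K E : Ω) = 1)
    (happ : ∀ y ∈ E, y ≠ 0 → ∃ m ∈ M, V.valuation (y - m) < V.valuation y) : E ≤ M := by
  set n := Module.finrank K E with hndef
  have hn0 : (n : Ω) ≠ 0 := fun h => by simp [h] at hn
  have hnpos : 0 < n := Module.finrank_pos
  have hres : ∀ (σ : Ω ≃ₐ[K] Ω) (x : E), σ x = σ.restrictNormal E x := fun σ x =>
    (σ.restrictNormal_commutes E x).symm
  have hσE : ∀ (σ : Ω ≃ₐ[K] Ω), ∀ x ∈ E, σ x ∈ E := fun σ x hx => by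
    rw [hres σ ⟨x, hx⟩]; exact SetLike.coe_mem _
  have hσn : ∀ (σ : Ω ≃ₐ[K] Ω), ∀ x ∈ E, (σ ^ n) x = x := fun σ x hx =>
    pow_finrank_apply σ _ (hres σ) ⟨x, hx⟩
  have hlt : ∀ (σ : Ω ≃ₐ[K] Ω), (∀ m ∈ M, σ m = m) → ∀ y ∈ E, y ≠ 0 →
      V.valuation (σ y - y) < V.valuation y := by
    intro σ hσ y hy hy0
    obtain ⟨m, hm, hlt⟩ := happ y hy hy0
    have h1 := valuation_algEquiv_lt hV σ hlt
    rw [map_sub, hσ m hm, valuation_algEquiv_eq hV σ hnpos (hσn σ y hy)] at h1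
    have : σ y - y = (σ y - m) - (y - m) := by ring
    rw [this]
    exact Valuation.map_sub_lt _ h1 hlt
  have hfix : ∀ (σ : Ω ≃ₐ[K] Ω), (∀ m ∈ M, σ m = m) → ∀ x ∈ E, σ x = x := by
    intro σ hσ x hx
    have hσj : ∀ j : ℕ, ∀ m ∈ M, (σ ^ j) m = m := by
      intro j m hm
      induction j with
      | zero => rfl
      | succ j ih => rw [pow_succ', AlgEquiv.mul_apply, ih, hσ m hm]
    set t : Ω := ∑ i ∈ Finset.range n, (σ ^ i) x with ht
    have htE : t ∈ E := sum_mem fun i _ => hσE _ x hx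
    have hσt : σ t = t := by
      have h1 : σ t = ∑ i ∈ Finset.range n, (σ ^ (i + 1)) x := by
        rw [ht, map_sum]
        exact Finset.sum_congr rfl fun i _ => by rw [pow_succ']; rfl
      have h2 := Finset.sum_range_succ (fun i => (σ ^ i) x) n
      rw [Finset.sum_range_succ', hσn σ x hx, ← h1, pow_zero] at h2
      exact add_right_cancel h2
    have hσjt : ∀ j : ℕ, (σ ^ j) t = t := by
      intro j
      induction j with
      | zero => rfl
      | succ j ih => rw [pow_succ', AlgEquiv.mul_apply, ih, hσt]
    -- `y` has trace zero for the cyclic group generated by `σ`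
    set y : Ω := n * x - t with hy
    have hyE : y ∈ E := sub_mem (mul_mem (natCast_mem E n) hx) htE
    have hy0 : y = 0 := by
      by_contra hy0
      have hsum : ∑ j ∈ Finset.range n, (σ ^ j) y = 0 := by
        simp only [hy, map_sub, map_mul, map_natCast, hσjt]
        rw [Finset.sum_sub_distrib, ← Finset.mul_sum, ← ht]
        simp
      have h1 : (n : Ω) * y = - ∑ j ∈ Finset.range n, ((σ ^ j) y - y) := by
        rw [Finset.sum_sub_distrib, hsum]
        simp
      have h2 : V.valuation ((n : Ω) * y) < V.valuation y := by
        rw [h1, Valuation.map_neg]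
        exact Valuation.map_sum_lt _ ((Valuation.ne_zero_iff _).mpr hy0) fun j _ =>
          hlt (σ ^ j) (hσj j) y hyE hy0
      rw [map_mul, hn, one_mul] at h2
      exact lt_irrefl _ h2
    have h3 : (n : Ω) * x = t := sub_eq_zero.mp hy0
    have h4 : (n : Ω) * σ x = n * x := by
      rw [h3, ← hσt, ← h3, map_mul, map_natCast]
    exact mul_left_cancel₀ hn0 h4
  intro x hx
  have hbot : x ∈ (⊥ : IntermediateField M Ω) := by
    rw [InfiniteGalois.mem_bot_iff_fixed]
    intro σ
    exact hfix (σ.restrictScalars K) (fun m hm => σ.commutes ⟨m, hm⟩) x hx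
  obtain ⟨m, hm⟩ := IntermediateField.mem_bot.mp hbot
  exact hm ▸ m.2

end Conjugation

/-! ### The finite extension containing all Galois extensions of given degree -/

theorem finite_setOf_le {K Ω : Type*} [Field K] [Field Ω] [Algebra K Ω] [CharZero K]
    (M : IntermediateField K Ω) [FiniteDimensional K M] :
    {E : IntermediateField K Ω | E ≤ M}.Finite := by
  have : Finite (IntermediateField K M) :=
    Field.finite_intermediateField_of_exists_primitive_element K M
      (Field.exists_primitive_element K M)
  refine (Set.finite_range (IntermediateField.lift : IntermediateField K M → _)).subset ?_
  intro E hE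
  exact ⟨IntermediateField.restrict hE, IntermediateField.lift_restrict hE⟩

/-- There is a finite extension `M` of `K` such that every nonzero element of every Galois extension
of `K` of degree `n` is approximated by an element of `M` up to smaller value. The field `M` is
generated by residue lifts for the degree bound `n * n` and by `n`-th roots of representatives of
the value group modulo `n`. -/
theorem exists_approx {K : Type*} [Field K] {Γ₀ : Type*} [LinearOrderedCommGroupWithZero Γ₀]
    (v : Valuation K Γ₀) (hsurj : ∀ γ : Γ₀ˣ, ∃ x : Kˣ, v (x : K) = (γ : Γ₀))
    {Ω : Type*} [Field Ω] [Algebra K Ω] [Algebra v.valuationSubring Ω]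
    [IsScalarTower v.valuationSubring K Ω] [IsAlgClosed Ω] [Algebra.IsAlgebraic K Ω]
    (V : ValuationSubring Ω) (hV : ∀ z, z ∈ V ↔ IsIntegral v.valuationSubring z)
    (hres : CharZero (ResidueField v.valuationSubring))
    (hbdd : IsBoundedField (ResidueField v.valuationSubring))
    {n : ℕ} (hn : 0 < n) (hval : Finite (Γ₀ˣ ⧸ (powMonoidHom n : Γ₀ˣ →* Γ₀ˣ).range)) :
    ∃ M : IntermediateField K Ω, FiniteDimensional K M ∧
      ∀ E : IntermediateField K Ω, IsGalois K E → Module.finrank K E = n →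
        ∀ y ∈ E, y ≠ 0 → ∃ m ∈ M, V.valuation (y - m) < V.valuation y := by
  classical
  have hnorm : Normal K Ω := normal_iff.mpr fun x =>
    ⟨Algebra.IsIntegral.isIntegral x, IsAlgClosed.splits _⟩
  obtain ⟨T, hT, hTM⟩ := exists_finite_residue_lifts (K := K) V hV hbdd (n * n)
  -- `n`-th roots of representatives of the value group modulo `n`
  choose π hπ using fun q : Γ₀ˣ ⧸ (powMonoidHom n : Γ₀ˣ →* Γ₀ˣ).range => hsurj q.out
  choose ρ hρ using fun q => IsAlgClosed.exists_pow_nat_eq (algebraMap K Ω (π q : K)) hn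
  let M : IntermediateField K Ω := IntermediateField.adjoin K (T ∪ Set.range ρ)
  have hMfin : FiniteDimensional K M := by
    have : Finite ↑(T ∪ Set.range ρ) := (hT.union (Set.finite_range ρ)).to_subtype
    exact IntermediateField.finiteDimensional_adjoin fun x _ => Algebra.IsIntegral.isIntegral x
  have hTle : T ⊆ M := Set.subset_union_left.trans (IntermediateField.subset_adjoin K _)
  have hρM : ∀ q, ρ q ∈ M := fun q => IntermediateField.subset_adjoin K _ (Or.inr ⟨q, rfl⟩)
  have hle : ∀ a b : K, b ≠ 0 → v a ≤ v b →
      V.valuation (algebraMap K Ω a) ≤ V.valuation (algebraMap K Ω b) := by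
    intro a b hb hab
    have h1 : v (a / b) ≤ 1 := by
      rw [map_div₀]; exact div_le_one_of_le₀ hab zero_le
    have h2 : V.valuation (algebraMap K Ω (a / b)) ≤ 1 := by
      rw [V.valuation_le_one_iff, hV]
      exact (isIntegral_algebraMap (R := v.valuationSubring) (A := K)
        (x := ⟨a / b, h1⟩)).algebraMap
    rw [map_div₀, map_div₀] at h2
    exact (div_le_one₀ (zero_lt_iff.mpr (by simpa using hb))).mp h2
  refine ⟨M, hMfin, fun E hE hEn y hyE hy0 => ?_⟩
  have hEfin : FiniteDimensional K E := Module.finite_of_finrank_pos (by omega)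
  set a : K := Algebra.norm K (⟨y, hyE⟩ : E) with ha
  have ha0 : a ≠ 0 := by
    rw [ha, Algebra.norm_ne_zero_iff]
    exact fun h => hy0 (congrArg (fun t : E => (t : Ω)) h)
  have hwa : V.valuation (algebraMap K Ω a) = V.valuation y ^ n := by
    rw [ha, valuation_norm hV, hEn]
  -- an element `c` of `M` with the same value as `y`, and `c ^ n` in `K`
  obtain ⟨c, hcM, hc0, b, hcb, hcy⟩ : ∃ c ∈ M, c ≠ 0 ∧ ∃ b : K, c ^ n = algebraMap K Ω b ∧
      V.valuation c = V.valuation y := by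
    let γ : Γ₀ˣ := Units.mk0 (v a) ((Valuation.ne_zero_iff _).mpr ha0)
    let q : Γ₀ˣ ⧸ (powMonoidHom n : Γ₀ˣ →* Γ₀ˣ).range := QuotientGroup.mk γ
    obtain ⟨⟨_, δ, rfl⟩, hδ⟩ := QuotientGroup.mk_out_eq_mul
      (powMonoidHom n : Γ₀ˣ →* Γ₀ˣ).range γ
    obtain ⟨z, hz⟩ := hsurj δ⁻¹
    have hb0 : (π q : K) * z ^ n ≠ 0 := mul_ne_zero (π q).ne_zero (pow_ne_zero _ z.ne_zero)
    have hvb : v ((π q : K) * z ^ n) = v a := by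
      have h1 : q.out * δ⁻¹ ^ n = γ := by
        change (QuotientGroup.mk γ : Γ₀ˣ ⧸ (powMonoidHom n : Γ₀ˣ →* Γ₀ˣ).range).out * _ = _
        rw [hδ]
        simp
      rw [map_mul, map_pow, hπ, hz]
      have h2 : ((q.out * δ⁻¹ ^ n : Γ₀ˣ) : Γ₀) = v a := congrArg Units.val h1
      rw [← h2, Units.val_mul, Units.val_pow_eq_pow_val]
    have hcn : (ρ q * algebraMap K Ω z) ^ n = algebraMap K Ω ((π q : K) * z ^ n) := by
      rw [mul_pow, hρ, map_mul, map_pow]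
    refine ⟨ρ q * algebraMap K Ω z, mul_mem (hρM q) (M.algebraMap_mem _), ?_, _, hcn, ?_⟩
    · intro h
      rw [h, zero_pow hn.ne'] at hcn
      exact hb0 ((map_eq_zero _).mp hcn.symm)
    · refine (pow_left_inj₀ zero_le zero_le hn.ne').mp ?_
      rw [← map_pow, hcn, ← hwa]
      exact le_antisymm (hle _ _ ha0 hvb.le) (hle _ _ hb0 hvb.ge)
  have hwc : V.valuation c ≠ 0 := (Valuation.ne_zero_iff _).mpr hc0
  set u : Ω := y / c with hu
  have huV : IsIntegral v.valuationSubring u := by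
    rw [← hV, ← V.valuation_le_one_iff, hu, map_div₀, hcy, div_self (hcy ▸ hwc)]
  have hunE : u ^ n ∈ E := by
    rw [hu, div_pow, hcb]
    exact div_mem (pow_mem hyE n) (E.algebraMap_mem b)
  have huni : IsIntegral v.valuationSubring (u ^ n) := huV.pow n
  -- `u ^ n` is integral of degree at most `n` over `R`, so substituting `X ^ n` into its minimal
  -- polynomial gives a monic relation for `u` of degree at most `n * n`.
  obtain ⟨m, hm, hum⟩ := hTM M hTle u (expand _ n (minpoly v.valuationSubring (u ^ n)))
    ((minpoly.monic huni).expand hn)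
    (by
      rw [natDegree_expand]
      refine Nat.mul_le_mul_right n ?_
      rw [← (minpoly.monic huni).natDegree_map (algebraMap v.valuationSubring K),
        ← minpoly.isIntegrallyClosed_eq_field_fractions' K huni]
      have h1 := minpoly.natDegree_le (A := K) (⟨u ^ n, hunE⟩ : E)
      rw [hEn] at h1
      have h2 : minpoly K (algebraMap E Ω ⟨u ^ n, hunE⟩) = minpoly K (⟨u ^ n, hunE⟩ : E) :=
        minpoly.algebraMap_eq (algebraMap E Ω).injective _
      exact h2 ▸ h1)
    (by rw [expand_aeval, minpoly.aeval])
  refine ⟨c * m, mul_mem hcM hm, ?_⟩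
  have : y - c * m = c * (u - m) := by rw [hu]; field_simp
  rw [this, map_mul, ← hcy]
  exact mul_lt_of_lt_one_right (zero_lt_iff.mpr hwc) hum

/-- Let `(K, v)` be a henselian valued field of equicharacteristic `0` (both `K` and
its residue field have characteristic `0`).  If the residue field is bounded and the value group
`vK = v(Kˣ)` (here assumed to be all of `Γ₀ˣ`) satisfies `[vK : n(vK)] < ∞` for every positive
integer `n`, then `K` is bounded. -/
theorem isBoundedField_of_henselian_equicharZero
    {K : Type u} [Field K] {Γ₀ : Type*} [LinearOrderedCommGroupWithZero Γ₀]
    (v : Valuation K Γ₀) (hsurj : ∀ γ : Γ₀ˣ, ∃ x : Kˣ, v (x : K) = (γ : Γ₀))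
    (hhens : HenselianLocalRing v.valuationSubring)
    (hK : CharZero K)
    (hres : CharZero (IsLocalRing.ResidueField v.valuationSubring))
    (hbdd : IsBoundedField (IsLocalRing.ResidueField v.valuationSubring))
    (hval : ∀ n : ℕ, 0 < n → Finite (Γ₀ˣ ⧸ (powMonoidHom n : Γ₀ˣ →* Γ₀ˣ).range)) :
    IsBoundedField K := by
  intro n hn
  have hgal : IsGalois K (AlgebraicClosure K) := ⟨⟩
  obtain ⟨V, hV⟩ := exists_valuationSubring_iff_isIntegral v.valuationSubring K
    (AlgebraicClosure K)
  obtain ⟨M, hM, hMapp⟩ := exists_approx v hsurj V hV hres hbdd hn (hval n hn)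
  have hVn : V.valuation (n : AlgebraicClosure K) = 1 := by
    have hu : IsUnit (n : v.valuationSubring) := by
      rw [← residue_ne_zero_iff_isUnit, map_natCast]
      exact Nat.cast_ne_zero.mpr hn.ne'
    obtain ⟨r, hr⟩ := isUnit_iff_exists_inv.mp hu
    have hle : ∀ r : v.valuationSubring,
        V.valuation (algebraMap v.valuationSubring (AlgebraicClosure K) r) ≤ 1 := fun r =>
      (V.valuation_le_one_iff _).mpr ((hV _).mpr isIntegral_algebraMap)
    have h1 := congrArg (fun t => V.valuation
      (algebraMap v.valuationSubring (AlgebraicClosure K) t)) hr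
    simp only [map_mul, map_one, map_natCast] at h1
    refine le_antisymm (by simpa only [map_natCast] using hle n) ?_
    rw [← h1]
    exact mul_le_of_le_one_right' (hle r)
  refine (finite_setOf_le M).subset ?_
  rintro E ⟨hE, hEn⟩
  have hEfin : FiniteDimensional K E := Module.finite_of_finrank_pos (by omega)
  exact le_of_forall_exists_valuation_sub_lt hV (by rw [hEn]; exact hVn) (hMapp E hE hEn)
end

section
/- Let $K$ be a field admitting a valuation $v$ such that: (1) $v$ is henselian; (2) $(K,v)$ is defectless; (3) the residue field $Kv$ is algebraically closed, or $Kv$ has characteristic $0$ and is bounded; (4) the value group $vK = v(K^\times)$ satisfies $[vK : n(vK)] < \infty$ for every positive integer $n$; (5) if $\mathrm{char}(Kv) = p > 0$ and $\mathrm{char}(K) = 0$ then every $\gamma \in vK$ with $-v(p) \le \gamma \le v(p)$ lies in $p(vK)$, and if $\mathrm{char}(K) = p$ then $vK$ is $p$-divisible. Then $K$ is bounded. -/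
/-!
Fix `n` and extend the valuation to an algebraic closure of `K`. It suffices to find one finite
extension `M` of `K` containing all extensions of degree `n`, because by the primitive element
theorem `M` has only finitely many Galois subextensions (`finite_setOf_isGalois_le`).

Defectlessness is used in the following form. By the fundamental equality, finite extensions have
bases for which no cancellation of values occurs in linear combinations (`exists_orthogonal_basis`);
hence best approximations in finite subextensions `E` exist, and an element all of whose
approximations in `E` can be improved lies in `E` (`mem_of_approx`). Together with Newton's iteration
this yields Hensel's lemma (`mem_of_simple_root`).

The field `M` is generated by `n`-th roots of representatives of the finite group `vK / n vK`, the
`n`-th roots of unity and, in the case of a bounded residue field, lifts of a finite set of residues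
spanning all residues of degree at most `n * n`; such a finite set exists by boundedness and
characteristic `0`. Let `L` have degree `n` and let `z ∈ L`, `c ∈ L ⊓ M`. The `n`-th power of `z - c`
has a value in `vK`, so it is an element of `K` times a unit. Extracting `n`-th roots of principal
units in `L` and using the construction of `M`, one finds an element of `L ⊓ M` that improves the
approximation `c` of `z`; thus `L ≤ M` (`le_of_root_conditions`).

If the residue characteristic is `0`, the roots needed are provided by Hensel's lemma. If the
residue field is algebraically closed, all units of finite extensions are `n`-th powers
(`exists_pow_eq_of_unit`). The case that matters is that of `p`-th roots with `p` the residue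
characteristic, where divisibility by `p` of the values between `v(p ^ N)` and `1` excludes any
obstruction (`exists_root_prime`).
-/

universe u

section Helpers

variable {K L : Type*} [Field K] [Field L] [Algebra K L]

/-- The inclusion of valuation subrings along a field extension, when the valuation subring `O'`
of `L` lies over the valuation subring `O` of `K`. -/
def ValuationSubring.inclusionOfComapEq (O : ValuationSubring K) (O' : ValuationSubring L)
    (h : O'.comap (algebraMap K L) = O) : O →+* O' where
  toFun x := ⟨algebraMap K L x, by
    have hx : (x : K) ∈ O'.comap (algebraMap K L) := by rw [h]; exact x.2
    exact hx⟩
  map_one' := by ext; simp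
  map_mul' x y := by ext; simp
  map_zero' := by ext; simp
  map_add' x y := by ext; simp

theorem ValuationSubring.isLocalHom_inclusionOfComapEq (O : ValuationSubring K)
    (O' : ValuationSubring L) (h : O'.comap (algebraMap K L) = O) :
    IsLocalHom (O.inclusionOfComapEq O' h) := by
  constructor
  intro a ha
  obtain ⟨b, hb⟩ := isUnit_iff_exists_inv.mp ha
  have hb' : algebraMap K L (a : K) * (b : L) = 1 := congrArg Subtype.val hb
  have hane : (a : K) ≠ 0 := by
    rintro h0
    rw [h0] at hb'
    simp at hb'
  have hbeq : (b : L) = algebraMap K L ((a : K)⁻¹) := by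
    rw [map_inv₀]
    exact eq_inv_of_mul_eq_one_right hb'
  have h2 : ((a : K)⁻¹ : K) ∈ O'.comap (algebraMap K L) :=
    ValuationSubring.mem_comap.mpr (hbeq ▸ b.2)
  have hmem : ((a : K)⁻¹ : K) ∈ O := h ▸ h2
  refine isUnit_iff_exists_inv.mpr ⟨⟨(a : K)⁻¹, hmem⟩, ?_⟩
  ext
  exact mul_inv_cancel₀ hane

end Helpers

section Degrees

variable {K L : Type*} [Field K] [Field L] [Algebra K L]

/-- The residue degree `[Lw : Kv]` of an extension of valued fields: the degree of the induced
extension of residue fields. -/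
noncomputable def ValuationSubring.residueDegree (O : ValuationSubring K) (O' : ValuationSubring L)
    (h : O'.comap (algebraMap K L) = O) : ℕ :=
  letI : IsLocalHom (O.inclusionOfComapEq O' h) := O.isLocalHom_inclusionOfComapEq O' h
  @Module.finrank (IsLocalRing.ResidueField O) (IsLocalRing.ResidueField O') _ _
    (IsLocalRing.ResidueField.map (O.inclusionOfComapEq O' h)).toAlgebra.toModule

/-- The ramification index `(wL : vK)` of an extension of valued fields: the index of the image of
the value group of `K` in the value group of `L`.  Identifying the value group of `O'` with
`Lˣ ⧸ O'ˣ`, this is the index `[Lˣ : Kˣ · O'ˣ]`. -/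
noncomputable def ValuationSubring.ramificationIndex (K : Type*) [Field K] {L : Type*} [Field L]
    [Algebra K L] (O' : ValuationSubring L) : ℕ :=
  ((Units.map (algebraMap K L).toMonoidHom).range ⊔ O'.unitGroup).index

/-- A valued field `(K, O)` is defectless if for every finite field extension `L/K` and every
valuation subring `O'` of `L` lying over `O`, the fundamental equality
`[L : K] = (wL : vK) · [Lw : Kv]` holds. -/
def ValuationSubring.IsDefectless (K : Type u) [Field K] (O : ValuationSubring K) : Prop :=
  ∀ (L : Type u) [Field L] [Algebra K L], FiniteDimensional K L →
    ∀ (O' : ValuationSubring L) (h : O'.comap (algebraMap K L) = O),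
      Module.finrank K L = ValuationSubring.ramificationIndex K O' * O.residueDegree O' h

end Degrees


/-! ### Orthogonal bases and best approximations -/

section OrthogonalBasis

variable {K : Type*} {L : Type u} [Field K] [Field L] [Algebra K L]

theorem ValuationSubring.map_mem_iff {O : ValuationSubring K} {O' : ValuationSubring L}
    (h : O'.comap (algebraMap K L) = O) (a : K) :
    O'.valuation (algebraMap K L a) ≤ 1 ↔ a ∈ O := by
  rw [ValuationSubring.valuation_le_one_iff, ← h, ValuationSubring.mem_comap]

/-- Lifts `u` of a basis of the residue field extension are valuation independent: the value of
`∑ a j * u j` is the largest of the values of the `a j`. -/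
theorem exists_residue_lifts (O : ValuationSubring K) (O' : ValuationSubring L)
    (h : O'.comap (algebraMap K L) = O) (hf : O.residueDegree O' h ≠ 0) :
    ∃ u : Fin (O.residueDegree O' h) → L, (∀ j, O'.valuation (u j) = 1) ∧
      ∀ a : Fin (O.residueDegree O' h) → K, a ≠ 0 → ∃ j₀, a j₀ ≠ 0 ∧
        (∀ j, O'.valuation (algebraMap K L (a j)) ≤ O'.valuation (algebraMap K L (a j₀))) ∧
        O'.valuation (∑ j, algebraMap K L (a j) * u j) =
          O'.valuation (algebraMap K L (a j₀)) := by
  let _ : IsLocalHom (O.inclusionOfComapEq O' h) := O.isLocalHom_inclusionOfComapEq O' h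
  let _ : Algebra (IsLocalRing.ResidueField O) (IsLocalRing.ResidueField O') :=
    (IsLocalRing.ResidueField.map (O.inclusionOfComapEq O' h)).toAlgebra
  have hfin : Module.finrank (IsLocalRing.ResidueField O) (IsLocalRing.ResidueField O') =
    O.residueDegree O' h := rfl
  have : Module.Finite (IsLocalRing.ResidueField O) (IsLocalRing.ResidueField O') :=
    Module.finite_of_finrank_pos (by omega)
  let β := Module.finBasisOfFinrankEq _ _ hfin
  choose u hu using fun j => IsLocalRing.residue_surjective (β j)
  refine ⟨fun j => u j, fun j => ?_, fun a ha => ?_⟩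
  · rw [← ValuationSubring.valuation_eq_one_iff]
    by_contra hn
    have : IsLocalRing.residue O' (u j) = 0 := by
      rwa [IsLocalRing.residue_eq_zero_iff, IsLocalRing.mem_maximalIdeal]
    exact β.ne_zero j (by rw [← hu, this])
  · have : Nonempty (Fin (O.residueDegree O' h)) := ⟨⟨0, by omega⟩⟩
    obtain ⟨j₀, hj₀⟩ := Finite.exists_max (fun j => O'.valuation (algebraMap K L (a j)))
    have ha0 : a j₀ ≠ 0 := by
      intro h0
      apply ha
      ext j
      have := hj₀ j
      simpa [h0] using this
    refine ⟨j₀, ha0, hj₀, ?_⟩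
    have hd : ∀ j, a j / a j₀ ∈ O := by
      intro j
      rw [← ValuationSubring.map_mem_iff h, map_div₀, map_div₀]
      exact div_le_one_of_le₀ (hj₀ j) zero_le
    let d : Fin (O.residueDegree O' h) → O := fun j => ⟨_, hd j⟩
    let S : O' := ∑ j, O.inclusionOfComapEq O' h (d j) * u j
    have hS : IsLocalRing.residue O' S = ∑ j, IsLocalRing.residue O (d j) • β j := by
      simp only [S, map_sum, map_mul, hu, Algebra.smul_def]
      rfl
    have hSne : IsLocalRing.residue O' S ≠ 0 := by
      rw [hS]
      intro h0
      have := Fintype.linearIndependent_iff.mp β.linearIndependent _ h0 j₀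
      have h1 : d j₀ = 1 := by
        ext
        exact div_self ha0
      rw [h1, map_one] at this
      exact one_ne_zero this
    have hS1 : O'.valuation (S : L) = 1 := by
      rw [← ValuationSubring.valuation_eq_one_iff]
      by_contra hn
      exact hSne (by rwa [IsLocalRing.residue_eq_zero_iff, IsLocalRing.mem_maximalIdeal])
    have hsum : ∑ j, algebraMap K L (a j) * (u j : L) = algebraMap K L (a j₀) * (S : L) := by
      have : (S : L) = ∑ j, algebraMap K L (a j / a j₀) * (u j : L) := by
        simp only [S, AddSubmonoidClass.coe_finsetSum]
        rfl
      rw [this, Finset.mul_sum]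
      refine Finset.sum_congr rfl fun j _ => ?_
      rw [← mul_assoc, ← map_mul, mul_div_cancel₀ _ ha0]
    rw [hsum, map_mul, hS1, mul_one]

/-- An extension satisfying the fundamental equality has an orthogonal basis, that is, a basis for
which no cancellation of values occurs in linear combinations. It consists of the products `x * u`
with `x` running over representatives of `wL / vK` and `u` over lifts of a residue basis: these are
independent, and there are `[L : K]` of them. -/
theorem exists_orthogonal_basis (O : ValuationSubring K) (O' : ValuationSubring L)
    (h : O'.comap (algebraMap K L) = O) [FiniteDimensional K L]
    (hd : Module.finrank K L = ValuationSubring.ramificationIndex K O' * O.residueDegree O' h) :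
    ∃ (ι : Type u) (_ : Fintype ι) (b : Module.Basis ι K L), ∀ (a : ι → K) (i : ι),
      O'.valuation (a i • b i) ≤ O'.valuation (∑ j, a j • b j) := by
  have hpos : 0 < Module.finrank K L := Module.finrank_pos
  have he : ValuationSubring.ramificationIndex K O' ≠ 0 := by
    intro h0
    rw [h0] at hd
    omega
  have hf : O.residueDegree O' h ≠ 0 := by
    intro h0
    rw [h0] at hd
    omega
  obtain ⟨u, hu1, hu⟩ := exists_residue_lifts O O' h hf
  unfold ValuationSubring.ramificationIndex at he hd
  set H := (Units.map (algebraMap K L).toMonoidHom).range ⊔ O'.unitGroup with hH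
  have : H.FiniteIndex := ⟨he⟩
  have : Finite (Lˣ ⧸ H) := Subgroup.finite_quotient_of_finiteIndex (H := H)
  let _ : Fintype (Lˣ ⧸ H) := Fintype.ofFinite _
  classical
  let x : Lˣ ⧸ H → Lˣ := fun q => q.out
  let b : (Lˣ ⧸ H) × Fin (O.residueDegree O' h) → L := fun i => x i.1 * u i.2
  let w := O'.valuation
  let Y : ((Lˣ ⧸ H) × Fin (O.residueDegree O' h) → K) → (Lˣ ⧸ H) → L :=
    fun a q => ∑ j, algebraMap K L (a (q, j)) * u j
  have hY : ∀ a q, Y a q ≠ 0 → ∃ c : K, c ≠ 0 ∧ w (Y a q) = w (algebraMap K L c) := by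
    intro a q hq
    have : (fun j => a (q, j)) ≠ 0 := by
      intro h0
      apply hq
      have h0' : ∀ j, a (q, j) = 0 := fun j => congrFun h0 j
      simp [Y, h0']
    obtain ⟨j₀, h1, _, h2⟩ := hu _ this
    exact ⟨_, h1, h2⟩
  have hYle : ∀ a q j, w (algebraMap K L (a (q, j))) ≤ w (Y a q) := by
    intro a q j
    by_cases h0 : (fun j => a (q, j)) = 0
    · have h0' : a (q, j) = 0 := congrFun h0 j
      simp [h0']
    · obtain ⟨j₀, _, h1, h2⟩ := hu _ h0
      exact (h1 j).trans h2.ge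
  -- nonzero terms have distinct values, as they lie in distinct classes modulo `vK`
  have hdist : ∀ a q q', Y a q ≠ 0 → Y a q' ≠ 0 →
      w (x q * Y a q) = w (x q' * Y a q') → q = q' := by
    intro a q q' hq hq' heq
    obtain ⟨c, hc0, hc⟩ := hY a q hq
    obtain ⟨c', hc0', hc'⟩ := hY a q' hq'
    rw [map_mul, map_mul, hc, hc'] at heq
    have hc0L : algebraMap K L c ≠ 0 := by simpa using hc0
    have hc0L' : algebraMap K L c' ≠ 0 := by simpa using hc0'
    rw [← QuotientGroup.out_eq' q, ← QuotientGroup.out_eq' q', QuotientGroup.eq]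
    change (x q)⁻¹ * x q' ∈ H
    let C : Lˣ := Units.map (algebraMap K L).toMonoidHom (Units.mk0 c hc0)
    let C' : Lˣ := Units.map (algebraMap K L).toMonoidHom (Units.mk0 c' hc0')
    have hCm : C ∈ H := Subgroup.mem_sup_left ⟨_, rfl⟩
    have hCm' : C' ∈ H := Subgroup.mem_sup_left ⟨_, rfl⟩
    have hU : (x q * C)⁻¹ * (x q' * C') ∈ H := by
      apply Subgroup.mem_sup_right
      rw [ValuationSubring.mem_unitGroup_iff]
      have hne : w (x q * C : Lˣ) ≠ 0 := by simp [w]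
      change w (((x q * C)⁻¹ * (x q' * C') : Lˣ) : L) = 1
      rw [Units.val_mul, map_mul, Units.val_inv_eq_inv_val, map_inv₀]
      rw [inv_mul_eq_one₀ hne]
      rw [Units.val_mul, Units.val_mul, map_mul, map_mul]
      exact heq
    have : (x q)⁻¹ * x q' = C * ((x q * C)⁻¹ * (x q' * C')) * C'⁻¹ := by
      rw [mul_inv]
      rw [mul_comm (x q)⁻¹ C⁻¹]
      group
    rw [this]
    exact H.mul_mem (H.mul_mem hCm hU) (H.inv_mem hCm')
  have hsum : ∀ a : (Lˣ ⧸ H) × Fin (O.residueDegree O' h) → K,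
      ∑ i, a i • b i = ∑ q, x q * Y a q := by
    intro a
    rw [Fintype.sum_prod_type]
    refine Finset.sum_congr rfl fun q _ => ?_
    rw [Finset.mul_sum]
    refine Finset.sum_congr rfl fun j _ => ?_
    simp only [b, Algebra.smul_def]
    ring
  have hmax : ∀ a q, w (x q * Y a q) ≤ w (∑ q, x q * Y a q) := by
    intro a
    have : Nonempty (Lˣ ⧸ H) := ⟨((1 : Lˣ) : Lˣ ⧸ H)⟩
    obtain ⟨q₀, hq₀⟩ := Finite.exists_max (fun q => w (x q * Y a q))
    by_cases h0 : Y a q₀ = 0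
    · intro q
      refine (hq₀ q).trans ?_
      simp [h0]
    · intro q
      refine (hq₀ q).trans (le_of_eq ?_)
      symm
      refine Valuation.map_sum_eq_of_lt _ (Finset.mem_univ _) ?_
      · intro i hi
        have hi : i ≠ q₀ := by simpa using hi
        refine lt_of_le_of_ne (hq₀ i) fun heq => ?_
        by_cases hi0 : Y a i = 0
        · simp only [hi0, mul_zero, map_zero] at heq
          exact h0 (by simpa using (map_eq_zero w).mp heq.symm)
        · exact hi (hdist a i q₀ hi0 h0 heq)
  have hmain : ∀ (a : (Lˣ ⧸ H) × Fin (O.residueDegree O' h) → K) i,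
      w (a i • b i) ≤ w (∑ j, a j • b j) := by
    rintro a ⟨q, j⟩
    rw [hsum]
    refine le_trans ?_ (hmax a q)
    simp only [b, Algebra.smul_def, map_mul]
    have : w (u j) = 1 := hu1 j
    rw [this, mul_one, mul_comm]
    gcongr
    exact hYle a q j
  have hli : LinearIndependent K b := by
    rw [Fintype.linearIndependent_iff]
    intro a ha i
    have := hmain a i
    rw [ha, map_zero, le_zero_iff, map_eq_zero] at this
    refine (smul_eq_zero.mp this).resolve_right ?_
    simp only [b, mul_eq_zero, Units.ne_zero, false_or]
    intro h0
    have := hu1 i.2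
    rw [h0] at this
    simp at this
  have hcard : Fintype.card ((Lˣ ⧸ H) × Fin (O.residueDegree O' h)) = Module.finrank K L := by
    rw [hd, Fintype.card_prod, Fintype.card_fin, ← Nat.card_eq_fintype_card]
    rfl
  have : Nonempty ((Lˣ ⧸ H) × Fin (O.residueDegree O' h)) :=
    Fintype.card_pos_iff.mp (by omega)
  refine ⟨_, inferInstance, basisOfLinearIndependentOfCardEqFinrank hli hcard, ?_⟩
  intro a i
  simpa using hmain a i

/-- If `L` has an orthogonal basis over `K`, then every subspace `V` contains a best approximation
to every vector. By induction on the dimension: some `y ∈ V` has its value attained at the `i`-th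
coordinate, `K y` is orthogonal to the hyperplane where the `i`-th coordinate vanishes, and it
suffices to approximate within that hyperplane. -/
theorem exists_best_approximation {Γ : Type*} [LinearOrderedCommGroupWithZero Γ]
    (w : Valuation L Γ) {ι : Type*} [Fintype ι] (b : Module.Basis ι K L)
    (hb : ∀ (a : ι → K) (i : ι), w (a i • b i) ≤ w (∑ j, a j • b j)) (V : Submodule K L) (z : L) :
    ∃ c ∈ V, ∀ c' ∈ V, w (z - c) ≤ w (z - c') := by
  have : FiniteDimensional K L := b.finiteDimensional_of_finite
  have hcoord : ∀ (y : L) i, w (b.repr y i • b i) ≤ w y := by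
    intro y i
    have := hb (b.repr y) i
    rwa [b.sum_repr] at this
  have hle : ∀ (y : L) g, (∀ i, w (b.repr y i • b i) ≤ g) → w y ≤ g := by
    intro y g hg
    rw [← b.sum_repr y]
    exact w.map_sum_le fun i _ => hg i
  induction hn : Module.finrank K V using Nat.strong_induction_on generalizing V z with
  | _ n ih =>
  by_cases hV : V = ⊥
  · subst hV
    refine ⟨0, by simp, ?_⟩
    intro c' hc'
    rw [Submodule.mem_bot] at hc'
    rw [hc']
  obtain ⟨y, hyV, hy0⟩ := Submodule.exists_mem_ne_zero_of_ne_bot hV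
  have hne : Nonempty ι := by
    by_contra hne
    rw [not_nonempty_iff] at hne
    apply hy0
    rw [← b.sum_repr y]
    simp
  obtain ⟨i, hi⟩ := Finite.exists_max (fun i => w (b.repr y i • b i))
  have hwy : w y = w (b.repr y i • b i) := le_antisymm (hle _ _ hi) (hcoord y i)
  have hyi : b.repr y i ≠ 0 := by
    intro h0
    rw [h0, zero_smul, map_zero, map_eq_zero] at hwy
    exact hy0 hwy
  let V' := V ⊓ LinearMap.ker (b.coord i)
  have hlt : V' < V := by
    refine lt_of_le_of_ne inf_le_left fun heq => ?_
    have : y ∈ V' := heq ▸ hyV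
    exact hyi this.2
  -- orthogonality of `y` to the hyperplane of vectors whose `i`-th coordinate vanishes
  have horth : ∀ s : L, b.repr s i = 0 → ∀ a : K, w (a • y) ≤ w (s + a • y) := by
    intro s hs a
    have := hcoord (s + a • y) i
    rw [map_add b.repr, Finsupp.add_apply, hs, zero_add, map_smul b.repr, Finsupp.smul_apply,
      smul_eq_mul, mul_smul] at this
    refine le_trans (le_of_eq ?_) this
    rw [Algebra.smul_def, map_mul, hwy, ← map_mul, ← Algebra.smul_def]
  set t := b.repr z i / b.repr y i with ht
  have hz1 : b.repr (z - t • y) i = 0 := by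
    rw [map_sub, Finsupp.sub_apply, map_smul, Finsupp.smul_apply, smul_eq_mul, ht,
      div_mul_cancel₀ _ hyi, sub_self]
  obtain ⟨c, hcV, hc⟩ := ih _ (hn ▸ Submodule.finrank_lt_finrank_of_lt hlt) V' (z - t • y) rfl
  refine ⟨c + t • y, V.add_mem hcV.1 (V.smul_mem _ hyV), fun c' hc' => ?_⟩
  set r := b.repr c' i / b.repr y i with hr
  have hc1 : b.repr (c' - r • y) i = 0 := by
    rw [map_sub, Finsupp.sub_apply, map_smul, Finsupp.smul_apply, smul_eq_mul, hr,
      div_mul_cancel₀ _ hyi, sub_self]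
  have hc1V : c' - r • y ∈ V' := ⟨V.sub_mem hc' (V.smul_mem _ hyV), hc1⟩
  have h1 := hc _ hc1V
  have h2 := horth ((z - t • y) - (c' - r • y)) (by
    rw [map_sub, Finsupp.sub_apply, hz1, hc1, sub_zero]) (t - r)
  have e1 : (z - t • y) - (c' - r • y) + (t - r) • y = z - c' := by
    rw [sub_smul]; ring
  have e2 : z - (c + t • y) = z - t • y - c := by ring
  rw [e1] at h2
  rw [e2]
  refine h1.trans ?_
  have e3 : (z - t • y) - (c' - r • y) = (z - c') - (t - r) • y := by rw [← e1]; ring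
  rw [e3]
  exact w.map_sub_le le_rfl h2

end OrthogonalBasis

/-! ### Approximation in an algebraically closed overfield -/

section Ambient

open Polynomial

/-- Chevalley: a valuation ring of `K` extends to every overfield. -/
theorem ValuationSubring.exists_comap_eq {K A : Type*} [Field K] [Field A] [Algebra K A]
    (O : ValuationSubring K) : ∃ Oa : ValuationSubring A, Oa.comap (algebraMap K A) = O := by
  obtain ⟨B, hB⟩ := (O.toLocalSubring.map (algebraMap K A)).exists_le_valuationSubring
  refine ⟨B, ?_⟩
  have hle : ∀ x ∈ O, algebraMap K A x ∈ B := fun x hx => hB.1 ⟨x, hx, rfl⟩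
  refine le_antisymm (fun x hx => ?_) hle
  rw [ValuationSubring.mem_comap] at hx
  by_contra hxO
  have hx0 : x ≠ 0 := by
    rintro rfl
    exact hxO O.zero_mem
  have hinv : x⁻¹ ∈ O := (O.mem_or_inv_mem x).resolve_left hxO
  have hmem : algebraMap K A x⁻¹ ∈ (O.toLocalSubring.map (algebraMap K A)).toSubring :=
    ⟨x⁻¹, hinv, rfl⟩
  have hunit : IsUnit (Subring.inclusion hB.1 ⟨_, hmem⟩) := by
    refine isUnit_iff_exists_inv.mpr ⟨⟨algebraMap K A x, hx⟩, ?_⟩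
    ext
    change algebraMap K A x⁻¹ * algebraMap K A x = 1
    rw [← map_mul, inv_mul_cancel₀ hx0, map_one]
  obtain ⟨⟨c, hc⟩, hc1⟩ := isUnit_iff_exists_inv.mp (hB.2.1 _ hunit)
  obtain ⟨d, hd, rfl⟩ := hc
  have hd1 : algebraMap K A x⁻¹ * algebraMap K A d = 1 := congrArg Subtype.val hc1
  rw [← map_mul, ← map_one (algebraMap K A)] at hd1
  have := (algebraMap K A).injective hd1
  have hdx : d = x := by
    field_simp at this
    exact this
  exact hxO (hdx ▸ hd)

/-- The map of residue fields induced by an extension of valuation rings. -/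
noncomputable def ValuationSubring.residueMap {K L : Type*} [Field K] [Field L] [Algebra K L]
    (O : ValuationSubring K) (O' : ValuationSubring L) (h : O'.comap (algebraMap K L) = O) :
    IsLocalRing.ResidueField O →+* IsLocalRing.ResidueField O' :=
  have : IsLocalHom (O.inclusionOfComapEq O' h) := O.isLocalHom_inclusionOfComapEq O' h
  IsLocalRing.ResidueField.map (O.inclusionOfComapEq O' h)

theorem ValuationSubring.residueMap_residue {K L : Type*} [Field K] [Field L] [Algebra K L]
    (O : ValuationSubring K) (O' : ValuationSubring L) (h : O'.comap (algebraMap K L) = O)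
    (x : O) : O.residueMap O' h (IsLocalRing.residue O x) =
      IsLocalRing.residue O' (O.inclusionOfComapEq O' h x) := rfl

theorem ValuationSubring.comap_valuation_le_iff {E A : Type*} [Field E] [Field A]
    (f : E →+* A) (Oa : ValuationSubring A) (x y : E) :
    (Oa.comap f).valuation x ≤ (Oa.comap f).valuation y ↔
      Oa.valuation (f x) ≤ Oa.valuation (f y) := by
  by_cases hy : y = 0
  · subst hy
    simp
  · have h1 : 0 < (Oa.comap f).valuation y := by simpa [zero_lt_iff] using hy
    have h2 : 0 < Oa.valuation (f y) := by simpa [zero_lt_iff] using hy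
    rw [← div_le_one₀ h1, ← div_le_one₀ h2, ← map_div₀, ← map_div₀, ← map_div₀,
      ValuationSubring.valuation_le_one_iff, ValuationSubring.valuation_le_one_iff,
      ValuationSubring.mem_comap]

theorem ValuationSubring.residue_eq_iff {A : Type*} [Field A] (Oa : ValuationSubring A)
    (x y : Oa) : IsLocalRing.residue Oa x = IsLocalRing.residue Oa y ↔
      Oa.valuation ((x : A) - y) < 1 := by
  rw [← sub_eq_zero, ← map_sub, IsLocalRing.residue_eq_zero_iff,
    ValuationSubring.valuation_lt_one_iff]
  rfl

variable {K A : Type u} [Field K] [Field A] [Algebra K A] {O : ValuationSubring K}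
  {Oa : ValuationSubring A}

theorem comap_comap_eq (h : Oa.comap (algebraMap K A) = O) (E : IntermediateField K A) :
    (Oa.comap (algebraMap E A)).comap (algebraMap K E) = O := by
  rw [ValuationSubring.comap_comap, ← IsScalarTower.algebraMap_eq, h]

/-- Over a defectless valued field, every finite subextension `E` contains a best approximation to
every algebraic element. -/
theorem exists_approx_s8 (h : Oa.comap (algebraMap K A) = O) (hdef : ValuationSubring.IsDefectless K O)
    (E : IntermediateField K A) [FiniteDimensional K E] {z : A} (hz : IsIntegral K z) :
    ∃ c ∈ E, ∀ c' ∈ E, Oa.valuation (z - c) ≤ Oa.valuation (z - c') := by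
  let M : IntermediateField K A := E ⊔ IntermediateField.adjoin K {z}
  have : FiniteDimensional K (IntermediateField.adjoin K {z}) :=
    IntermediateField.adjoin.finiteDimensional hz
  have hEM : E ≤ M := le_sup_left
  have hzM : z ∈ M := (le_sup_right : _ ≤ M) (IntermediateField.mem_adjoin_simple_self K z)
  have hM := comap_comap_eq h M
  obtain ⟨ι, _, b, hb⟩ := exists_orthogonal_basis O _ hM (hdef M inferInstance _ hM)
  obtain ⟨c, hc, hcmin⟩ := exists_best_approximation _ b hb
    (Subalgebra.toSubmodule E.toSubalgebra |>.comap M.val.toLinearMap) ⟨z, hzM⟩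
  refine ⟨c, hc, fun c' hc' => ?_⟩
  have := hcmin ⟨c', hEM hc'⟩ hc'
  rwa [ValuationSubring.comap_valuation_le_iff] at this

/-- An element whose approximations in a finite subextension `E` can always be improved within `E`
belongs to `E`. In the presence of defectlessness this replaces arguments by completeness. -/
theorem mem_of_approx (h : Oa.comap (algebraMap K A) = O)
    (hdef : ValuationSubring.IsDefectless K O)
    (E : IntermediateField K A) [FiniteDimensional K E] {z : A} (hz : IsIntegral K z)
    (happ : ∀ c ∈ E, z ≠ c → ∃ c' ∈ E, Oa.valuation (z - c') < Oa.valuation (z - c)) : z ∈ E := by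
  obtain ⟨c, hc, hmin⟩ := exists_approx_s8 h hdef E hz
  by_contra hzE
  obtain ⟨c', hc', hlt⟩ := happ c hc (fun he => hzE (he ▸ hc))
  exact absurd (hmin c' hc') (not_le.mpr hlt)

/-- The exponent of the value group of `E` modulo that of `K` divides `[E : K]`, because the
ramification index does. -/
theorem valuation_pow_finrank (h : Oa.comap (algebraMap K A) = O)
    (hdef : ValuationSubring.IsDefectless K O)
    (E : IntermediateField K A) [FiniteDimensional K E] {x : A} (hx : x ∈ E) (hx0 : x ≠ 0) :
    ∃ k : K, k ≠ 0 ∧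
      Oa.valuation x ^ Module.finrank K E = Oa.valuation (algebraMap K A k) := by
  have hE := comap_comap_eq h E
  have hd := hdef E inferInstance _ hE
  unfold ValuationSubring.ramificationIndex at hd
  set H := (Units.map (algebraMap K E).toMonoidHom).range ⊔
    (Oa.comap (algebraMap E A)).unitGroup with hH
  let X : Eˣ := Units.mk0 ⟨x, hx⟩ (by simpa [Subtype.ext_iff] using hx0)
  have hmem : X ^ Module.finrank K E ∈ H := by
    rw [hd, pow_mul]
    exact H.pow_mem (H.pow_index_mem X) _
  obtain ⟨_, ⟨k, rfl⟩, u, hu, hk⟩ := Subgroup.mem_sup.mp hmem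
  refine ⟨k, k.ne_zero, ?_⟩
  have hu' : Oa.valuation (algebraMap E A (u : E)) = 1 := by
    rw [ValuationSubring.mem_unitGroup_iff] at hu
    have h1 := (ValuationSubring.comap_valuation_le_iff (algebraMap E A) Oa u 1).mp
      (by rw [hu, map_one])
    have h2 := (ValuationSubring.comap_valuation_le_iff (algebraMap E A) Oa 1 u).mp
      (by rw [hu, map_one])
    simp only [map_one] at h1 h2
    exact le_antisymm h1 h2
  have e : algebraMap K A k * algebraMap E A (u : E) = x ^ Module.finrank K E := by
    have := congrArg (fun t : Eˣ => algebraMap E A (t : E)) hk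
    simp only [Units.val_mul, Units.val_pow_eq_pow_val, map_mul, map_pow] at this
    exact this
  rw [← map_pow, ← e, map_mul, hu', mul_one]

/-- Residues of elements of `E` have degree at most `[E : K]` over the residue field of `K`. -/
theorem exists_residue_polynomial (h : Oa.comap (algebraMap K A) = O)
    (hdef : ValuationSubring.IsDefectless K O)
    (E : IntermediateField K A) [FiniteDimensional K E] (y : Oa) (hy : (y : A) ∈ E) :
    ∃ p : (IsLocalRing.ResidueField O)[X], p.Monic ∧ Irreducible p ∧
      p.natDegree ≤ Module.finrank K E ∧
      p.eval₂ (O.residueMap Oa h) (IsLocalRing.residue Oa y) = 0 := by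
  have hE := comap_comap_eq h E
  have hd := hdef E inferInstance _ hE
  let OE := Oa.comap (algebraMap E A)
  let _ : Algebra (IsLocalRing.ResidueField O) (IsLocalRing.ResidueField OE) :=
    (O.residueMap OE hE).toAlgebra
  have hfin : Module.finrank (IsLocalRing.ResidueField O) (IsLocalRing.ResidueField OE) =
    O.residueDegree OE hE := rfl
  have hpos : 0 < Module.finrank K E := Module.finrank_pos
  have hf : O.residueDegree OE hE ≠ 0 := by
    intro h0
    rw [h0] at hd
    omega
  have : Module.Finite (IsLocalRing.ResidueField O) (IsLocalRing.ResidueField OE) :=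
    Module.finite_of_finrank_pos (by omega)
  let y' : OE := ⟨⟨y, hy⟩, y.2⟩
  let β := IsLocalRing.residue OE y'
  have hint : IsIntegral (IsLocalRing.ResidueField O) β := Algebra.IsIntegral.isIntegral β
  refine ⟨minpoly _ β, minpoly.monic hint, minpoly.irreducible hint, ?_, ?_⟩
  · refine (minpoly.natDegree_le β).trans ?_
    rw [hfin, hd]
    exact Nat.le_mul_of_pos_left _ (Nat.pos_of_ne_zero (fun h0 => by rw [h0] at hd; omega))
  · let φ := OE.residueMap Oa (show Oa.comap (algebraMap E A) = OE from rfl)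
    have hφ : φ.comp (O.residueMap OE hE) = O.residueMap Oa h := by
      refine RingHom.ext fun x => ?_
      obtain ⟨x, rfl⟩ := IsLocalRing.residue_surjective x
      rfl
    have hβ : φ β = IsLocalRing.residue Oa y := rfl
    rw [← hβ, ← hφ, ← Polynomial.hom_eval₂]
    have : (minpoly (IsLocalRing.ResidueField O) β).eval₂ (O.residueMap OE hE) β = 0 :=
      minpoly.aeval _ β
    rw [this, map_zero]

end Ambient

/-! ### Hensel lifting -/

section Hensel

open Polynomial

variable {K A : Type u} [Field K] [Field A] [Algebra K A] {O : ValuationSubring K}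
  {Oa : ValuationSubring A}

/-- An approximate root of a monic polynomial is congruent to a root: the value at `y` is the
product of the differences of `y` with the roots, which are all integral. -/
theorem exists_root_near [IsAlgClosed A] {g : Oa[X]} (hg : g.Monic) {y : Oa}
    (hy : Oa.valuation (g.eval y : Oa) < 1) :
    ∃ z : Oa, g.eval z = 0 ∧ Oa.valuation ((y : A) - z) < 1 := by
  let G : A[X] := g.map Oa.subtype
  have hGm : G.Monic := hg.map _
  have hroots : ∀ z ∈ G.roots, ∃ hz : z ∈ Oa, g.eval ⟨z, hz⟩ = 0 := by
    intro z hz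
    have h0 : G.eval z = 0 := (mem_roots'.mp hz).2
    have hint : IsIntegral Oa z := by
      refine ⟨g, hg, ?_⟩
      rw [← eval_map]
      exact h0
    obtain ⟨z', rfl⟩ := IsIntegrallyClosed.isIntegral_iff.mp hint
    refine ⟨z'.2, ?_⟩
    have h1 : G.eval (Oa.subtype z') = 0 := h0
    rw [eval_map_apply] at h1
    exact Oa.subtype_injective (h1.trans (map_zero _).symm)
  have hprod : G = (G.roots.map fun a => X - C a).prod :=
    (IsAlgClosed.splits G).eq_prod_roots_of_monic hGm
  have hval : ((g.eval y : Oa) : A) = (G.roots.map fun a => (y : A) - a).prod := by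
    have h1 : ((g.eval y : Oa) : A) = G.eval (y : A) := (eval_map_apply (f := Oa.subtype) y).symm
    rw [h1]
    conv_lhs => rw [hprod]
    rw [eval_multiset_prod, Multiset.map_map]
    simp
  by_contra hcon
  push Not at hcon
  have hone : Oa.valuation (g.eval y : Oa) = 1 := by
    rw [hval, map_multiset_prod, Multiset.map_map]
    refine Multiset.prod_eq_one fun v hv => ?_
    obtain ⟨a, ha, rfl⟩ := Multiset.mem_map.mp hv
    obtain ⟨hz, hz0⟩ := hroots a ha
    change Oa.valuation ((y : A) - a) = 1
    exact le_antisymm (Oa.valuation_le_one (y - ⟨a, hz⟩)) (hcon ⟨a, hz⟩ hz0)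
  exact absurd hone hy.ne

theorem isAlgClosed_residueField [IsAlgClosed A] :
    IsAlgClosed (IsLocalRing.ResidueField Oa) := by
  refine IsAlgClosed.of_exists_root _ fun p hp hirr => ?_
  have hlift : p ∈ lifts (IsLocalRing.residue Oa) := by
    rw [lifts_iff_coeff_lifts]
    exact fun n => IsLocalRing.residue_surjective _
  obtain ⟨q, hqp, hdeg, hqm⟩ := lifts_and_degree_eq_and_monic hlift hp
  have hne : (q.map Oa.subtype).degree ≠ 0 := by
    rw [hqm.degree_map, hdeg]
    exact hirr.degree_pos.ne'
  obtain ⟨z, hz⟩ := IsAlgClosed.exists_root _ hne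
  have hint : IsIntegral Oa z := by
    refine ⟨q, hqm, ?_⟩
    rw [← eval_map]
    exact hz
  obtain ⟨z', rfl⟩ := IsIntegrallyClosed.isIntegral_iff.mp hint
  refine ⟨IsLocalRing.residue Oa z', ?_⟩
  have h1 : (q.map Oa.subtype).eval (Oa.subtype z') = 0 := hz
  rw [eval_map_apply] at h1
  have h2 : q.eval z' = 0 := Oa.subtype_injective (h1.trans (map_zero _).symm)
  rw [← hqp, eval_map_apply, h2, map_zero]

/-- A form of Hensel's lemma: a simple root `z` of `g` whose residue is attained on the finite
extension `E` lies in `E`, provided that `g` and its derivative map `E` to itself. Newton's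
iteration improves every approximation of `z`. -/
theorem mem_of_simple_root [Algebra.IsAlgebraic K A] (h : Oa.comap (algebraMap K A) = O)
    (hdef : ValuationSubring.IsDefectless K O)
    (E : IntermediateField K A) [FiniteDimensional K E] {g : Oa[X]} {z : Oa}
    (hz : g.eval z = 0) (hz' : Oa.valuation (g.derivative.eval z : Oa) = 1)
    (hgE : ∀ c : Oa, (c : A) ∈ E →
      ((g.eval c : Oa) : A) ∈ E ∧ ((g.derivative.eval c : Oa) : A) ∈ E)
    {c₀ : A} (hc₀ : c₀ ∈ E) (hzc₀ : Oa.valuation ((z : A) - c₀) < 1) : (z : A) ∈ E := by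
  refine mem_of_approx h hdef E (Algebra.IsIntegral.isIntegral _) fun c hc hne => ?_
  by_cases h1 : Oa.valuation ((z : A) - c) < 1
  swap
  · exact ⟨c₀, hc₀, hzc₀.trans_le (not_lt.mp h1)⟩
  have hcO : c ∈ Oa := by
    have : (z : A) - c ∈ Oa := (Oa.valuation_le_one_iff _).mp h1.le
    have := Oa.toSubring.sub_mem z.2 this
    simpa using this
  lift c to Oa using hcO
  obtain ⟨q, hq⟩ := g.binomExpansion z (c - z)
  rw [add_sub_cancel, hz, zero_add] at hq
  obtain ⟨r, hr⟩ := sub_dvd_eval_sub c z g.derivative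
  set a := g.eval c
  set d := g.derivative.eval c
  set d₀ := g.derivative.eval z
  have hlt : Oa.valuation ((c - z : Oa) : A) < 1 := by
    rw [Oa.valuation.map_sub_swap] at h1
    exact h1
  have hd1 : Oa.valuation (d : A) = 1 := by
    have e : (d : A) = d₀ + ((c - z) * r : Oa) := by
      rw [← hr]
      push_cast
      ring
    rw [e, Valuation.map_add_eq_of_lt_left _ ?_, hz']
    rw [hz']
    push_cast
    rw [map_mul]
    exact mul_lt_one_of_lt_of_le hlt (Oa.valuation_le_one r)
  have hd0 : (d : A) ≠ 0 := by
    intro h0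
    rw [h0, map_zero] at hd1
    exact zero_ne_one hd1
  -- one step of Newton's iteration
  refine ⟨c - a / d, E.sub_mem hc (E.div_mem (hgE c hc).1 (hgE c hc).2), ?_⟩
  have key : a - (c - z) * d = (c - z) ^ 2 * (q - r) := by
    have : d = d₀ + (c - z) * r := by rw [← hr]; ring
    rw [hq, this]
    ring
  have key' : (z : A) - (c - a / d) =
      ((c - z : Oa) : A) * (((c - z : Oa) : A) * ((q - r : Oa) : A)) / d := by
    have : (a : A) - (c - z) * d = (c - z) ^ 2 * (q - r) := by
      have := congrArg (Subtype.val) key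
      push_cast at this
      exact this
    field_simp
    push_cast
    linear_combination this
  rw [key', map_div₀, hd1, div_one, map_mul, Oa.valuation.map_sub_swap z]
  have hpos : 0 < Oa.valuation ((c - z : Oa) : A) := by
    rw [zero_lt_iff, Valuation.ne_zero_iff]
    push_cast
    exact sub_ne_zero.mpr (Ne.symm hne)
  refine mul_lt_of_lt_one_right hpos ?_
  rw [map_mul]
  exact mul_lt_one_of_lt_of_le hlt (Oa.valuation_le_one _)

end Hensel

/-! ### Roots of prime order of units -/

section PrimeRoots

open Polynomial

/-- The binomial expansion of `(c + t) ^ p`, with the term linear in `t` made explicit. -/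
theorem exists_add_pow_prime_expansion {R : Type*} [CommRing R] {p : ℕ} (hp : p.Prime) (c t : R) :
    ∃ q, (c + t) ^ p = c ^ p + t ^ p + p * c ^ (p - 1) * t + p * t ^ 2 * q := by
  have h2 := hp.two_le
  have hmem : p - 1 ∈ Finset.Ioo 0 p := by
    rw [Finset.mem_Ioo]
    omega
  have hdvd : t ∣ ∑ k ∈ (Finset.Ioo 0 p).erase (p - 1),
      c ^ (k - 1) * t ^ (p - k - 1) * ((p.choose k / p : ℕ) : R) := by
    refine Finset.dvd_sum fun k hk => ?_
    rw [Finset.mem_erase, Finset.mem_Ioo] at hk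
    exact Dvd.dvd.mul_right (Dvd.dvd.mul_left (dvd_pow_self t (by omega)) _) _
  obtain ⟨q, hq⟩ := hdvd
  have e : p.choose (p - 1) / p = 1 := by
    rw [Nat.choose_symm (show 1 ≤ p by omega), Nat.choose_one_right, Nat.div_self hp.pos]
  refine ⟨c * q, ?_⟩
  rw [add_pow_prime_eq hp c t, ← Finset.add_sum_erase _ _ hmem, hq, e]
  have h1 : p - (p - 1) - 1 = 0 := by omega
  have h3 : c ^ (p - 1) = c * c ^ (p - 1 - 1) := by
    rw [← pow_succ']
    congr 1
    omega
  rw [h1, h3]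
  push_cast
  ring

variable {K A : Type u} [Field K] [Field A] [Algebra K A] {O : ValuationSubring K}
  {Oa : ValuationSubring A}

/-- Suppose that all residues come from `K` and that small values of `E` are divisible by `p`. Then
every unit `u` of `E` has a `p`-th root in `E`, even if `p` is the residue characteristic. Otherwise
let `z` be a `p`-th root as close to `E` as possible, `b ∈ E` a best approximation and `t = z - b`.
The value of `t` is not attained on `E`, since otherwise `b` could be improved. On the other hand
`u - b ^ p ∈ E` has the value of `t ^ p` if `p` is at most of the size of `t ^ (p - 1)`, and the
value of `p * t` if not; in both cases the value of `t` would be attained on `E`. -/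
theorem exists_root_prime [IsAlgClosed A] [Algebra.IsAlgebraic K A]
    (h : Oa.comap (algebraMap K A) = O)
    (hdef : ValuationSubring.IsDefectless K O)
    (hres : ∀ y : Oa, ∃ c : K, Oa.valuation ((y : A) - algebraMap K A c) < 1)
    (E : IntermediateField K A) [FiniteDimensional K E] {p : ℕ} (hp : p.Prime)
    (hdiv : ∀ x ∈ E, x ≠ 0 → Oa.valuation (p : A) ^ 2 ≤ Oa.valuation x → Oa.valuation x ≤ 1 →
      ∃ y ∈ E, Oa.valuation y ^ p = Oa.valuation x)
    {u : A} (hu : u ∈ E) (hu1 : Oa.valuation u = 1) : ∃ s ∈ E, s ^ p = u := by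
  classical
  have h2 := hp.two_le
  choose c hcE hc using fun z : A =>
    exists_approx_s8 h hdef E (Algebra.IsIntegral.isIntegral (R := K) z)
  have hmon : (X ^ p - C u : A[X]).Monic := monic_X_pow_sub_C u hp.ne_zero
  have hcard : Multiset.card (X ^ p - C u : A[X]).roots = p := by
    rw [splits_iff_card_roots.mp (IsAlgClosed.splits _), natDegree_X_pow_sub_C]
  have hroot : ∀ z, z ∈ (X ^ p - C u : A[X]).roots ↔ z ^ p = u := by
    intro z
    rw [mem_roots hmon.ne_zero, IsRoot.def]
    simp [sub_eq_zero]
  obtain ⟨z₁, hz₁⟩ : ∃ z : A, z ^ p = u := IsAlgClosed.exists_pow_nat_eq u hp.pos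
  -- among all roots of `X ^ p - u`, one that is closest to `E`
  obtain ⟨z, hzr, hzmin⟩ := Finset.exists_min_image (X ^ p - C u : A[X]).roots.toFinset
    (fun z => Oa.valuation (z - c z)) ⟨z₁, by simpa using (hroot z₁).mpr hz₁⟩
  rw [Multiset.mem_toFinset, hroot] at hzr
  have hmin : ∀ z' : A, z' ^ p = u → ∀ c' ∈ E,
      Oa.valuation (z - c z) ≤ Oa.valuation (z' - c') := fun z' hz' c' hc' =>
    (hzmin z' (by rwa [Multiset.mem_toFinset, hroot])).trans (hc z' c' hc')
  have hz1 : Oa.valuation z = 1 := by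
    have : Oa.valuation z ^ p = 1 := by rw [← map_pow, hzr, hu1]
    exact (pow_left_inj₀ zero_le zero_le hp.ne_zero).mp (this.trans (one_pow p).symm)
  by_cases ht0 : z - c z = 0
  · exact ⟨z, by rw [sub_eq_zero.mp ht0]; exact hcE z, hzr⟩
  exfalso
  set b := c z with hb
  have hbE : b ∈ E := hcE z
  set t := z - b with ht
  have hwt0 : 0 < Oa.valuation t := by rwa [zero_lt_iff, Valuation.ne_zero_iff]
  have hwt1 : Oa.valuation t < 1 := by
    obtain ⟨κ, hκ⟩ := hres ⟨z, (Oa.valuation_le_one_iff z).mp hz1.le⟩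
    exact (hmin z hzr _ (E.algebraMap_mem κ)).trans_lt hκ
  have hb1 : Oa.valuation b = 1 := by
    have : b = z - t := by rw [ht]; ring
    rw [this, Valuation.map_sub_eq_of_lt_left _ (by rwa [hz1]), hz1]
  -- the value of `t` is not attained on `E`, as all residues come from `K`
  have hnot : ∀ a ∈ E, Oa.valuation t ≠ Oa.valuation a := by
    intro a ha heq
    have ha0 : 0 < Oa.valuation a := heq ▸ hwt0
    have hta : Oa.valuation (t / a) = 1 := by rw [map_div₀, heq, div_self ha0.ne']
    obtain ⟨κ, hκ⟩ := hres ⟨t / a, (Oa.valuation_le_one_iff _).mp hta.le⟩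
    have hane : a ≠ 0 := by
      rintro rfl
      simp at ha0
    have h1 := hmin z hzr (b + a * algebraMap K A κ)
      (E.add_mem hbE (E.mul_mem ha (E.algebraMap_mem κ)))
    have h2 : z - (b + a * algebraMap K A κ) = a * (t / a - algebraMap K A κ) := by
      field_simp
      rw [ht]
      ring
    rw [h2, map_mul, heq] at h1
    exact absurd h1 (not_le.mpr (mul_lt_of_lt_one_right ha0 hκ))
  have hsE : u - b ^ p ∈ E := E.sub_mem hu (pow_mem hbE p)
  -- lower bound: `u - b ^ p` is up to sign the product of the differences with all roots
  have hlow : Oa.valuation t ^ p ≤ Oa.valuation (u - b ^ p) := by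
    have hprod := (IsAlgClosed.splits (X ^ p - C u : A[X])).eq_prod_roots_of_monic hmon
    have hev : b ^ p - u = ((X ^ p - C u : A[X]).roots.map fun a => b - a).prod := by
      have h1 : b ^ p - u = (X ^ p - C u : A[X]).eval b := by simp
      rw [h1]
      conv_lhs => rw [hprod]
      rw [eval_multiset_prod, Multiset.map_map]
      simp
    rw [Oa.valuation.map_sub_swap u (b ^ p), hev, map_multiset_prod, Multiset.map_map]
    have hc' : Multiset.card ((X ^ p - C u : A[X]).roots.map
        (Oa.valuation ∘ fun a => b - a)) = p := by rw [Multiset.card_map, hcard]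
    conv_lhs => rw [← hc']
    refine Multiset.pow_card_le_prod fun v hv => ?_
    obtain ⟨a, ha, rfl⟩ := Multiset.mem_map.mp hv
    change _ ≤ Oa.valuation (b - a)
    rw [Oa.valuation.map_sub_swap b a]
    exact hmin a ((hroot a).mp ha) b hbE
  have hp1 : Oa.valuation (p : A) ≤ 1 := (Oa.valuation_le_one_iff _).mpr (natCast_mem Oa p)
  have htO : t ∈ Oa := (Oa.valuation_le_one_iff _).mp hwt1.le
  have hbO : b ∈ Oa := (Oa.valuation_le_one_iff _).mp hb1.le
  obtain ⟨q, hq⟩ := exists_add_pow_prime_expansion hp (⟨b, hbO⟩ : Oa) ⟨t, htO⟩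
  have hq' : u - b ^ p = t ^ p + (p * b ^ (p - 1) * t + p * t ^ 2 * q) := by
    have h1 := congrArg (Subtype.val) hq
    push_cast at h1
    have h3 : b + t = z := by rw [ht]; ring
    rw [h3, hzr] at h1
    rw [h1]
    ring
  have hq2 : Oa.valuation ((p : A) * t ^ 2 * q) ≤
      Oa.valuation (p : A) * Oa.valuation t * Oa.valuation t := by
    rw [map_mul, map_mul, map_pow, pow_two, ← mul_assoc]
    exact mul_le_of_le_one_right zero_le (Oa.valuation_le_one q)
  have hlin : Oa.valuation ((p : A) * b ^ (p - 1) * t) =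
      Oa.valuation (p : A) * Oa.valuation t := by
    rw [map_mul, map_mul, map_pow, hb1, one_pow, mul_one]
  have hpt : Oa.valuation t ^ p = Oa.valuation t ^ (p - 1) * Oa.valuation t := by
    rw [← pow_succ]
    congr 1
    omega
  rcases le_or_gt (Oa.valuation (p : A)) (Oa.valuation t ^ (p - 1)) with hcase | hcase
  · have hup : Oa.valuation (u - b ^ p) ≤ Oa.valuation t ^ p := by
      rw [hq']
      have h1 : Oa.valuation (p : A) * Oa.valuation t ≤ Oa.valuation t ^ p := by
        rw [hpt]
        gcongr
      refine Valuation.map_add_le _ (by rw [map_pow]) (Valuation.map_add_le _ ?_ ?_)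
      · rw [hlin]
        exact h1
      · exact hq2.trans ((mul_le_of_le_one_right zero_le hwt1.le).trans h1)
    have heq := le_antisymm hup hlow
    have hpos : 0 < Oa.valuation (u - b ^ p) := by
      rw [heq]
      exact pow_pos hwt0 p
    have hge : Oa.valuation (p : A) ^ 2 ≤ Oa.valuation (u - b ^ p) := by
      rw [heq, hpt, pow_two]
      refine mul_le_mul' hcase (hcase.trans ?_)
      exact pow_le_of_le_one zero_le hwt1.le (by omega)
    obtain ⟨y, hyE, hy⟩ := hdiv _ hsE ((Valuation.pos_iff _).mp hpos) hge
      (heq ▸ pow_le_one₀ zero_le hwt1.le)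
    rw [heq] at hy
    exact hnot y hyE ((pow_left_inj₀ zero_le zero_le hp.ne_zero).mp hy).symm
  · have hp0 : Oa.valuation (p : A) ≠ 0 := (zero_le.trans_lt hcase).ne'
    have hp0' : (p : A) ≠ 0 := (Valuation.ne_zero_iff _).mp hp0
    have hptpos : 0 < Oa.valuation (p : A) * Oa.valuation t := mul_pos (zero_lt_iff.mpr hp0) hwt0
    have hval : Oa.valuation (u - b ^ p) = Oa.valuation (p : A) * Oa.valuation t := by
      rw [hq']
      have h3 : Oa.valuation ((p : A) * b ^ (p - 1) * t + p * t ^ 2 * q) =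
          Oa.valuation (p : A) * Oa.valuation t := by
        rw [Valuation.map_add_eq_of_lt_left, hlin]
        rw [hlin]
        exact hq2.trans_lt (mul_lt_of_lt_one_right hptpos hwt1)
      rw [Valuation.map_add_eq_of_lt_right, h3]
      rw [h3, map_pow, hpt]
      exact mul_lt_mul_of_pos_right hcase hwt0
    refine hnot ((u - b ^ p) / p) (E.div_mem hsE (natCast_mem E p)) ?_
    rw [map_div₀, hval, mul_div_cancel_left₀ _ hp0]

end PrimeRoots

/-! ### Algebraically closed residue field -/

section AlgClosedResidueField

open Polynomial

variable {K A : Type u} [Field K] [Field A] [Algebra K A] {O : ValuationSubring K}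
  {Oa : ValuationSubring A}

/-- If the residue field of `K` is algebraically closed, every integral element is congruent to an
element of `K`. -/
theorem exists_residue_approx_of_isAlgClosed [Algebra.IsAlgebraic K A]
    [IsAlgClosed (IsLocalRing.ResidueField O)] (h : Oa.comap (algebraMap K A) = O)
    (hdef : ValuationSubring.IsDefectless K O) (y : Oa) :
    ∃ c : K, Oa.valuation ((y : A) - algebraMap K A c) < 1 := by
  have : FiniteDimensional K (IntermediateField.adjoin K {(y : A)}) :=
    IntermediateField.adjoin.finiteDimensional (Algebra.IsIntegral.isIntegral _)
  obtain ⟨p, hpm, hirr, -, hp⟩ := exists_residue_polynomial h hdef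
    (IntermediateField.adjoin K {(y : A)}) y (IntermediateField.mem_adjoin_simple_self K _)
  have hdeg := IsAlgClosed.degree_eq_one_of_irreducible _ hirr
  rw [eq_X_add_C_of_degree_eq_one hdeg, show p.leadingCoeff = 1 from hpm] at hp
  obtain ⟨c, hc⟩ := IsLocalRing.residue_surjective (p.coeff 0)
  rw [← hc] at hp
  refine ⟨-(c : K), ?_⟩
  have : IsLocalRing.residue Oa y = IsLocalRing.residue Oa (O.inclusionOfComapEq Oa h (-c)) := by
    rw [← ValuationSubring.residueMap_residue, map_neg, map_neg]
    simpa [add_eq_zero_iff_eq_neg] using hp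
  exact (ValuationSubring.residue_eq_iff Oa _ _).mp this

/-- The `p`-divisibility of the values between `v p` and `(v p)⁻¹`, respectively of all values if
`K` has characteristic `p`, extends to the values between any power of `v p` and `1`. -/
theorem exists_pow_eq_of_johnson {Γ₀ : Type*} [LinearOrderedCommGroupWithZero Γ₀]
    (v : Valuation K Γ₀) (hsurj : ∀ γ : Γ₀ˣ, ∃ x : Kˣ, v (x : K) = (γ : Γ₀))
    (h5 : ∀ p : ℕ, 0 < p → CharP (IsLocalRing.ResidueField v.valuationSubring) p →
      (CharZero K →
        ∀ γ : Γ₀ˣ, v ((p : K)) ≤ (γ : Γ₀) → (γ : Γ₀) ≤ (v ((p : K)))⁻¹ →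
          ∃ δ : Γ₀ˣ, δ ^ p = γ) ∧
      (CharP K p → ∀ γ : Γ₀ˣ, ∃ δ : Γ₀ˣ, δ ^ p = γ))
    {p : ℕ} (hp : p.Prime) (N : ℕ) {k : K} (hk0 : k ≠ 0) (hk : v p ^ N ≤ v k) (hk1 : v k ≤ 1) :
    ∃ y : K, v y ^ p = v k := by
  have hlift : ∀ k : K, k ≠ 0 → (∃ δ : Γ₀ˣ, (δ : Γ₀) ^ p = v k) → ∃ y : K, v y ^ p = v k := by
    rintro k - ⟨δ, hδ⟩
    obtain ⟨x, hx⟩ := hsurj δ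
    exact ⟨x, by rw [hx, hδ]⟩
  have hp1 : v p ≤ 1 := natCast_mem v.valuationSubring p
  rcases hp1.eq_or_lt with hp1 | hp1
  · refine ⟨1, ?_⟩
    rw [hp1, one_pow] at hk
    rw [map_one, one_pow, le_antisymm hk1 hk]
  have hres : ((p : ℕ) : IsLocalRing.ResidueField v.valuationSubring) = 0 := by
    rw [← map_natCast (IsLocalRing.residue v.valuationSubring), IsLocalRing.residue_eq_zero_iff,
      Valuation.mem_maximalIdeal_iff]
    exact hp1
  have hchar : CharP (IsLocalRing.ResidueField v.valuationSubring) p :=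
    (CharP.charP_iff_prime_eq_zero hp).mpr hres
  obtain ⟨h50, h5p⟩ := h5 p hp.pos hchar
  obtain ⟨q, hq⟩ := CharP.exists K
  rcases CharP.char_is_prime_or_zero K q with hqp | rfl
  · have hqp' : q = p := by
      have : ((q : ℕ) : IsLocalRing.ResidueField v.valuationSubring) = 0 := by
        rw [← map_natCast (IsLocalRing.residue v.valuationSubring)]
        have : ((q : ℕ) : v.valuationSubring) = 0 := by
          refine v.valuationSubring.subtype_injective ?_
          rw [map_natCast, map_zero, CharP.cast_eq_zero]
        rw [this, map_zero]
      rw [CharP.cast_eq_zero_iff _ p] at this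
      exact ((Nat.prime_dvd_prime_iff_eq hp hqp).mp this).symm
    subst hqp'
    obtain ⟨δ, hδ⟩ := h5p hq (Units.mk0 (v k) ((Valuation.ne_zero_iff _).mpr hk0))
    refine hlift k hk0 ⟨δ, ?_⟩
    rw [← Units.val_pow_eq_pow_val, hδ, Units.val_mk0]
  · have hz : CharZero K := CharP.charP_to_charZero K
    have hp0 : (p : K) ≠ 0 := Nat.cast_ne_zero.mpr hp.ne_zero
    have hvp : 0 < v p := by rwa [zero_lt_iff, Valuation.ne_zero_iff]
    have hstep : ∀ k : K, k ≠ 0 → v p ≤ v k → v k ≤ 1 → ∃ y : K, v y ^ p = v k := by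
      intro k hk0 hk hk1
      obtain ⟨δ, hδ⟩ := h50 hz (Units.mk0 (v k) ((Valuation.ne_zero_iff _).mpr hk0)) hk
        (hk1.trans ((one_le_inv₀ hvp).mpr hp1.le))
      refine hlift k hk0 ⟨δ, ?_⟩
      rw [← Units.val_pow_eq_pow_val, hδ, Units.val_mk0]
    induction N generalizing k with
    | zero =>
      refine ⟨1, ?_⟩
      rw [pow_zero] at hk
      rw [map_one, one_pow, le_antisymm hk1 hk]
    | succ N ih =>
      rcases le_or_gt (v p) (v k) with hle | hlt
      · exact hstep k hk0 hle hk1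
      · obtain ⟨y₁, hy₁⟩ := hstep p hp0 le_rfl hp1.le
        obtain ⟨y₂, hy₂⟩ := ih (k := k / p) (div_ne_zero hk0 hp0)
          (by rw [map_div₀, le_div_iff₀ hvp, ← pow_succ]; exact hk)
          (by rw [map_div₀]; exact div_le_one_of_le₀ hlt.le zero_le)
        refine ⟨y₂ * y₁, ?_⟩
        rw [map_mul, mul_pow, hy₁, hy₂, ← map_mul, div_mul_cancel₀ _ hp0]

/-- Divisibility of small values by `p` passes from `K` to its finite extensions. -/
theorem exists_pow_valuation_eq (h : Oa.comap (algebraMap K A) = O)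
    (hdef : ValuationSubring.IsDefectless K O)
    (E : IntermediateField K A) [FiniteDimensional K E] {p : ℕ} (hp : p.Prime)
    (hD : ∀ (N : ℕ) (k : K), k ≠ 0 → Oa.valuation (p : A) ^ N ≤ Oa.valuation (algebraMap K A k) →
      Oa.valuation (algebraMap K A k) ≤ 1 →
        ∃ y : K, Oa.valuation (algebraMap K A y) ^ p = Oa.valuation (algebraMap K A k))
    {x : A} (hx : x ∈ E) (hx0 : x ≠ 0) (hpx : Oa.valuation (p : A) ^ 2 ≤ Oa.valuation x)
    (hx1 : Oa.valuation x ≤ 1) : ∃ y ∈ E, Oa.valuation y ^ p = Oa.valuation x := by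
  have hwx : 0 < Oa.valuation x := by rwa [zero_lt_iff, Valuation.ne_zero_iff]
  -- Powers of `p` are first removed from the exponent `j`; once it is prime to `p`, an inverse of
  -- `j` modulo `p` yields the `p`-th root of the value.
  have main : ∀ j : ℕ, 0 < j → ∀ k : K, Oa.valuation x ^ j = Oa.valuation (algebraMap K A k) →
      ∃ y ∈ E, Oa.valuation y ^ p = Oa.valuation x := by
    intro j
    induction j using Nat.strong_induction_on with
    | _ j ih =>
    intro hj k hk
    have hk0 : k ≠ 0 := by
      rintro rfl
      rw [map_zero, map_zero] at hk
      exact (pow_pos hwx j).ne' hk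
    obtain ⟨y, hy⟩ := hD (2 * j) k hk0
      (by rw [← hk, pow_mul]; exact pow_le_pow_left₀ zero_le hpx j)
      (by rw [← hk]; exact pow_le_one₀ zero_le hx1)
    by_cases hpj : p ∣ j
    · obtain ⟨i, rfl⟩ := hpj
      have hi : 0 < i := Nat.pos_of_mul_pos_left hj
      refine ih i ?_ hi y ?_
      · exact lt_mul_of_one_lt_left hi hp.one_lt
      · rw [← hk, mul_comm, pow_mul] at hy
        exact ((pow_left_inj₀ zero_le zero_le hp.ne_zero).mp hy).symm
    · have hcop : Nat.Coprime j p := ((Nat.Prime.coprime_iff_not_dvd hp).mpr hpj).symm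
      obtain ⟨b, -, hb⟩ := Nat.exists_mul_mod_eq_one_of_coprime hcop hp.one_lt
      obtain ⟨d, hbd⟩ : ∃ d, j * b = p * d + 1 :=
        ⟨j * b / p, by conv_lhs => rw [← Nat.div_add_mod (j * b) p, hb]⟩
      refine ⟨algebraMap K A y ^ b / x ^ d,
        E.div_mem (pow_mem (E.algebraMap_mem y) _) (pow_mem hx _), ?_⟩
      rw [map_div₀, map_pow, map_pow, div_pow, ← pow_mul, ← pow_mul, mul_comm b p, pow_mul, hy,
        ← hk, ← pow_mul, hbd, mul_comm d p, pow_succ,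
        mul_div_cancel_left₀ _ (pow_pos hwx _).ne']
  obtain ⟨k, -, hk⟩ := valuation_pow_finrank h hdef E hx hx0
  exact main _ Module.finrank_pos k hk

/-- Over an algebraically closed residue field every unit of a finite extension is an `n`-th power
in that extension, even if `n` is divisible by the residue characteristic. -/
theorem exists_pow_eq_of_unit [IsAlgClosed A] [Algebra.IsAlgebraic K A]
    (h : Oa.comap (algebraMap K A) = O)
    (hdef : ValuationSubring.IsDefectless K O)
    (hres : ∀ y : Oa, ∃ c : K, Oa.valuation ((y : A) - algebraMap K A c) < 1)
    (hD : ∀ p : ℕ, p.Prime → ∀ (N : ℕ) (k : K), k ≠ 0 →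
      Oa.valuation (p : A) ^ N ≤ Oa.valuation (algebraMap K A k) →
      Oa.valuation (algebraMap K A k) ≤ 1 →
        ∃ y : K, Oa.valuation (algebraMap K A y) ^ p = Oa.valuation (algebraMap K A k))
    (E : IntermediateField K A) [FiniteDimensional K E] {n : ℕ} (hn : 0 < n)
    {u : A} (hu : u ∈ E) (hu1 : Oa.valuation u = 1) : ∃ s ∈ E, s ^ n = u := by
  induction n using induction_on_primes generalizing u with
  | zero => omega
  | one => exact ⟨u, hu, pow_one u⟩
  | prime_mul p a hp ih =>
    have ha : 0 < a := Nat.pos_of_mul_pos_left hn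
    obtain ⟨s, hs, hsu⟩ := exists_root_prime h hdef hres E hp
      (fun x hx hx0 => exists_pow_valuation_eq h hdef E hp (hD p hp) hx hx0) hu hu1
    have hs1 : Oa.valuation s = 1 := by
      have : Oa.valuation s ^ p = 1 := by rw [← map_pow, hsu, hu1]
      exact (pow_left_inj₀ zero_le zero_le hp.ne_zero).mp (this.trans (one_pow p).symm)
    obtain ⟨r, hr, hrs⟩ := ih ha hs hs1
    exact ⟨r, hr, by rw [mul_comm, pow_mul, hrs, hsu]⟩

end AlgClosedResidueField

/-! ### Bounded residue field -/

section BoundedResidueField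

open Polynomial

/-- Over a bounded field of characteristic `0` the roots of all nonzero polynomials of degree at
most `N` lie in one finite extension: there are only finitely many splitting fields, since each is
Galois of degree at most `N!`. -/
theorem IsBoundedField.exists_roots_mem {k : Type u} [Field k] [CharZero k]
    (hk : IsBoundedField k) (N : ℕ) :
    ∃ F : IntermediateField k (AlgebraicClosure k), FiniteDimensional k F ∧
      ∀ p : k[X], p ≠ 0 → p.natDegree ≤ N → ∀ x, aeval x p = 0 → x ∈ F := by
  classical
  let S : Set (IntermediateField k (AlgebraicClosure k)) :=
    ⋃ n ∈ Finset.Icc 1 N.factorial, {E | IsGalois k E ∧ Module.finrank k E = n}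
  have hS : S.Finite := by
    refine Set.Finite.biUnion (Finset.finite_toSet _) fun n hn => hk n ?_
    exact (Finset.mem_Icc.mp hn).1
  refine ⟨⨆ E ∈ hS.toFinset, E, ?_, fun p hp hpN x hx => ?_⟩
  · refine IntermediateField.finiteDimensional_iSup_of_finset' fun E hE => ?_
    rw [Set.Finite.mem_toFinset] at hE
    simp only [S, Set.mem_iUnion, Finset.mem_Icc] at hE
    obtain ⟨n, hn, -, hE⟩ := hE
    exact Module.finite_of_finrank_pos (by omega)
  · let E := IntermediateField.adjoin k (p.rootSet (AlgebraicClosure k))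
    have hsplit : p.IsSplittingField k E :=
      IntermediateField.adjoin_rootSet_isSplittingField (IsAlgClosed.splits _)
    have hfin : FiniteDimensional k E := IsSplittingField.finiteDimensional E p
    have hnorm : Normal k E := Normal.of_isSplittingField p
    have hgal : IsGalois k E := ⟨⟩
    have hcard : Module.finrank k E ≤ N.factorial := by
      have hnorm' : Normal k p.SplittingField := Normal.of_isSplittingField p
      have hgal' : IsGalois k p.SplittingField := ⟨⟩
      have hfact : Fact ((p.map (algebraMap k p.SplittingField)).Splits) :=
        ⟨SplittingField.splits p⟩
      rw [(IsSplittingField.algEquiv E p).toLinearEquiv.finrank_eq,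
        ← IsGalois.card_aut_eq_finrank]
      refine (Nat.card_le_card_of_injective _
        (Gal.galActionHom_injective p p.SplittingField)).trans ?_
      rw [Nat.card_perm]
      refine Nat.factorial_le (le_trans ?_ hpN)
      rw [Nat.card_coe_set_eq, rootSet_def, Set.ncard_coe_finset]
      exact (Multiset.toFinset_card_le _).trans (card_roots_map_le_natDegree p)
    have hES : E ∈ hS.toFinset := by
      rw [Set.Finite.mem_toFinset]
      simp only [S, Set.mem_iUnion, Finset.mem_Icc]
      exact ⟨_, ⟨Module.finrank_pos, hcard⟩, hgal, rfl⟩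
    refine (le_iSup₂_of_le E hES le_rfl : E ≤ ⨆ E ∈ hS.toFinset, E) ?_
    exact IntermediateField.subset_adjoin k _ ((mem_rootSet_of_ne hp).mpr hx)

/-- The same finiteness inside any algebraically closed overfield `l` of `k`: the roots of
polynomials of degree at most `N` lie in a finite-dimensional `k`-subspace. -/
theorem IsBoundedField.exists_span_roots {k : Type u} {l : Type*} [Field k] [Field l] [CharZero k]
    [IsAlgClosed l] (hk : IsBoundedField k) (ι : k →+* l) (N : ℕ) :
    ∃ (m : ℕ) (b : Fin m → l), ∀ (β : l) (p : k[X]), p ≠ 0 → p.natDegree ≤ N →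
      p.eval₂ ι β = 0 → ∃ r : Fin m → k, β = ∑ j, ι (r j) * b j := by
  obtain ⟨F, hF, hroots⟩ := hk.exists_roots_mem N
  let _ : Algebra k l := ι.toAlgebra
  let ψ : AlgebraicClosure k →ₐ[k] l := IsAlgClosed.lift
  let b := Module.finBasis k F
  refine ⟨_, fun j => ψ (b j), fun β p hp hpN hpy => ?_⟩
  have hψ : (ψ : AlgebraicClosure k →+* l).comp (algebraMap _ _) = ι := ψ.comp_algebraMap
  obtain ⟨x, hx⟩ : β ∈ (ψ : AlgebraicClosure k →+* l).range := by
    refine (IsAlgClosed.splits (p.map (algebraMap k (AlgebraicClosure k)))).mem_range_of_isRoot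
      (Polynomial.map_ne_zero hp) ?_
    rw [map_map, hψ, IsRoot.def, eval_map, hpy]
  replace hx : ψ x = β := hx
  have hxF : x ∈ F := by
    have : ψ (aeval x p) = 0 := by
      rw [← aeval_algHom_apply, hx]
      exact hpy
    exact hroots p hp hpN x (ψ.injective (this.trans (map_zero ψ).symm))
  refine ⟨b.repr ⟨x, hxF⟩, ?_⟩
  have hsum := congrArg (F.val) (b.sum_repr ⟨x, hxF⟩)
  rw [← hx]
  change ψ (F.val ⟨x, hxF⟩) = _
  rw [← hsum, map_sum, map_sum]
  refine Finset.sum_congr rfl fun j _ => ?_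
  have e : F.val (b.repr ⟨x, hxF⟩ j • b j) = b.repr ⟨x, hxF⟩ j • (b j : AlgebraicClosure k) := rfl
  rw [e, Algebra.smul_def, map_mul, ψ.commutes]
  rfl

variable {K A : Type u} [Field K] [Field A] [Algebra K A] {O : ValuationSubring K}
  {Oa : ValuationSubring A}

/-- The finite extension of the residue field containing all roots of polynomials of degree at most
`N` is contained in the residue field of some finite extension of `K`. -/
theorem exists_residue_approx_of_isBoundedField [IsAlgClosed A] [Algebra.IsAlgebraic K A]
    [CharZero (IsLocalRing.ResidueField O)] (hk : IsBoundedField (IsLocalRing.ResidueField O))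
    (h : Oa.comap (algebraMap K A) = O) (N : ℕ) :
    ∃ M : IntermediateField K A, FiniteDimensional K M ∧
      ∀ (y : Oa) (p : (IsLocalRing.ResidueField O)[X]), p ≠ 0 → p.natDegree ≤ N →
        p.eval₂ (O.residueMap Oa h) (IsLocalRing.residue Oa y) = 0 →
          ∃ m ∈ M, Oa.valuation ((y : A) - m) < 1 := by
  have : IsAlgClosed (IsLocalRing.ResidueField Oa) := isAlgClosed_residueField
  obtain ⟨m, b, hb⟩ := hk.exists_span_roots (O.residueMap Oa h) N
  choose B hB using fun j => IsLocalRing.residue_surjective (b j)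
  refine ⟨IntermediateField.adjoin K (Set.range fun j => (B j : A)), ?_, ?_⟩
  · exact IntermediateField.finiteDimensional_adjoin fun x _ => Algebra.IsIntegral.isIntegral x
  intro y p hp hpN hpy
  obtain ⟨r', hr'⟩ := hb _ p hp hpN hpy
  choose r hr using fun j => IsLocalRing.residue_surjective (r' j)
  refine ⟨((∑ j, O.inclusionOfComapEq Oa h (r j) * B j : Oa) : A), ?_, ?_⟩
  · push_cast
    refine sum_mem fun j _ => mul_mem (IntermediateField.algebraMap_mem _ (r j : K)) ?_
    exact IntermediateField.subset_adjoin K _ ⟨j, rfl⟩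
  · refine (ValuationSubring.residue_eq_iff Oa _ _).mp ?_
    rw [hr', map_sum]
    refine Finset.sum_congr rfl fun j _ => ?_
    rw [map_mul, hB, ← ValuationSubring.residueMap_residue, hr]

end BoundedResidueField

/-! ### A criterion for containment -/

section Capture

open Polynomial

variable {K A : Type u} [Field K] [Field A] [Algebra K A] {O : ValuationSubring K}
  {Oa : ValuationSubring A}

/-- A criterion for a degree `n` extension `L` to be contained in `M`. The elements of `L` are
approximated from `L ⊓ M` better and better: an error term `a` satisfies `a ^ n = k * u` with
`k ∈ K` and `u` a unit, and extracting an `n`-th root of the principal unit `u / u₀` turns `a` into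
an element of `L ⊓ M` with the same value. -/
theorem le_of_root_conditions [Algebra.IsAlgebraic K A]
    (h : Oa.comap (algebraMap K A) = O) (hdef : ValuationSubring.IsDefectless K O)
    (L M : IntermediateField K A) [FiniteDimensional K L]
    (hQ : ∀ u ∈ L, Oa.valuation u = 1 → ∃ u₀ ∈ L ⊓ M, Oa.valuation (u - u₀) < 1)
    (hP : ∀ u ∈ L, Oa.valuation (u - 1) < 1 → ∃ s ∈ L, s ^ Module.finrank K L = u)
    (hR : ∀ a ∈ L, ∀ k : K, k ≠ 0 → ∀ u ∈ L ⊓ M, Oa.valuation u = 1 →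
      a ^ Module.finrank K L = algebraMap K A k * u → a ∈ M) : L ≤ M := by
  intro z hz
  have hle : L ⊓ M ≤ L := inf_le_left
  have : FiniteDimensional K (L ⊓ M : IntermediateField K A) := by
    exact FiniteDimensional.of_injective (IntermediateField.inclusion hle).toLinearMap
      (IntermediateField.inclusion_injective hle)
  refine (mem_of_approx h hdef (L ⊓ M) (Algebra.IsIntegral.isIntegral z)
    fun c hc hne => ?_).2
  set n := Module.finrank K L
  have hn : n ≠ 0 := Module.finrank_pos.ne'
  have hunit : ∀ u u₀ : A, Oa.valuation u = 1 → Oa.valuation (u - u₀) < 1 →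
      Oa.valuation u₀ = 1 := by
    intro u u₀ hu hlt
    have e : u₀ = u - (u - u₀) := by ring
    rw [e, Valuation.map_sub_eq_of_lt_left _ (by rwa [hu]), hu]
  have hne0 : ∀ u : A, Oa.valuation u = 1 → u ≠ 0 := by
    rintro u hu rfl
    rw [map_zero] at hu
    exact zero_ne_one hu
  have haL : z - c ∈ L := L.sub_mem hz hc.1
  set a := z - c
  have ha0 : a ≠ 0 := sub_ne_zero.mpr hne
  obtain ⟨k, hk0, hk⟩ := valuation_pow_finrank h hdef L haL ha0
  have hk0' : algebraMap K A k ≠ 0 := by simpa using hk0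
  have huL : a ^ n / algebraMap K A k ∈ L := L.div_mem (pow_mem haL n) (L.algebraMap_mem k)
  have hu1 : Oa.valuation (a ^ n / algebraMap K A k) = 1 := by
    rw [map_div₀, map_pow, hk, div_self ((Valuation.ne_zero_iff _).mpr hk0')]
  obtain ⟨u₀, hu₀, hlt⟩ := hQ _ huL hu1
  have hu₀1 := hunit _ _ hu1 hlt
  have hu₀0 := hne0 _ hu₀1
  obtain ⟨s, hsL, hs⟩ := hP (a ^ n / algebraMap K A k / u₀) (L.div_mem huL hu₀.1) (by
    rw [div_sub_one hu₀0, map_div₀, hu₀1, div_one]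
    exact hlt)
  have hs1 : Oa.valuation s = 1 := by
    have : Oa.valuation s ^ n = 1 := by rw [← map_pow, hs, map_div₀, hu1, hu₀1, div_one]
    exact (pow_left_inj₀ zero_le zero_le hn).mp (this.trans (one_pow n).symm)
  have hs0 := hne0 _ hs1
  have hmL : a / s ∈ L := L.div_mem haL hsL
  have hmM : a / s ∈ M := by
    refine hR _ hmL k hk0 u₀ hu₀ hu₀1 ?_
    rw [div_pow, hs]
    field_simp
  obtain ⟨s₀, hs₀, hslt⟩ := hQ s hsL hs1
  refine ⟨c + a / s * s₀, add_mem hc (mul_mem ⟨hmL, hmM⟩ hs₀), ?_⟩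
  have e : z - (c + a / s * s₀) = a * (s - s₀) / s := by
    field_simp
    ring
  rw [e, map_div₀, hs1, div_one, map_mul]
  exact mul_lt_of_lt_one_right (zero_lt_iff.mpr ((Valuation.ne_zero_iff _).mpr ha0)) hslt

/-- Finiteness of `vK / n vK` yields a finite extension of `K` in which every element of `K` is an
`n`-th power up to a unit of `K`; it can be chosen to contain the `n`-th roots of unity. -/
theorem exists_root_field [IsAlgClosed A] [Algebra.IsAlgebraic K A]
    {Γ₀ : Type*} [LinearOrderedCommGroupWithZero Γ₀]
    (v : Valuation K Γ₀) (hsurj : ∀ γ : Γ₀ˣ, ∃ x : Kˣ, v (x : K) = (γ : Γ₀))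
    {n : ℕ} (hn : 0 < n)
    (h4 : Finite (Γ₀ˣ ⧸ (powMonoidHom n : Γ₀ˣ →* Γ₀ˣ).range)) :
    ∃ M : IntermediateField K A, FiniteDimensional K M ∧ (∀ ζ : A, ζ ^ n = 1 → ζ ∈ M) ∧
      ∀ k : K, k ≠ 0 → ∃ q ∈ M, q ≠ 0 ∧ ∃ u : K, v u = 1 ∧
        algebraMap K A k = q ^ n * algebraMap K A u := by
  classical
  choose x hx using fun c : Γ₀ˣ ⧸ (powMonoidHom n : Γ₀ˣ →* Γ₀ˣ).range =>
    hsurj (Quotient.out c)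
  choose q hq using fun c => IsAlgClosed.exists_pow_nat_eq (algebraMap K A (x c)) hn
  let S : Set A := Set.range q ∪ {ζ | ζ ^ n = 1}
  have hS : Finite S := by
    refine Set.Finite.to_subtype ((Set.finite_range q).union ?_)
    refine ((nthRoots n (1 : A)).toFinset.finite_toSet).subset fun ζ hζ => ?_
    simpa [mem_nthRoots hn] using hζ
  refine ⟨IntermediateField.adjoin K S,
    IntermediateField.finiteDimensional_adjoin fun x _ => Algebra.IsIntegral.isIntegral x,
    fun ζ hζ => IntermediateField.subset_adjoin K S (Or.inr hζ), fun k hk => ?_⟩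
  have hvk : v k ≠ 0 := (Valuation.ne_zero_iff _).mpr hk
  let c : Γ₀ˣ ⧸ (powMonoidHom n : Γ₀ˣ →* Γ₀ˣ).range := QuotientGroup.mk (Units.mk0 (v k) hvk)
  have hc : QuotientGroup.mk (Quotient.out c) = c := QuotientGroup.out_eq' c
  obtain ⟨δ, hδ⟩ := QuotientGroup.eq.mp hc
  obtain ⟨y, hy⟩ := hsurj δ
  have hqc0 : q c ≠ 0 := by
    intro h0
    have := hq c
    rw [h0, zero_pow hn.ne'] at this
    exact (x c).ne_zero (by simpa using this.symm)
  have hval : v k = v (x c) * v y ^ n := by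
    have h1 := congrArg (fun t : Γ₀ˣ => (t : Γ₀)) (eq_inv_mul_iff_mul_eq.mp hδ)
    rw [hx, hy]
    simpa using h1.symm
  refine ⟨q c * algebraMap K A y, mul_mem (IntermediateField.subset_adjoin K S (Or.inl ⟨c, rfl⟩))
    (IntermediateField.algebraMap_mem _ _), mul_ne_zero hqc0 (by simp),
    k / (x c * y ^ n), ?_, ?_⟩
  · rw [map_div₀, map_mul, map_pow, hval, div_self]
    rwa [← hval]
  · rw [mul_pow, hq, ← map_pow, ← map_mul, ← map_mul, mul_div_cancel₀]
    exact mul_ne_zero (x c).ne_zero (pow_ne_zero _ y.ne_zero)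

end Capture

/-! ### A finite extension containing all extensions of degree `n` -/

section Uniform

open Polynomial

variable {K A : Type u} [Field K] [Field A] [Algebra K A] {O : ValuationSubring K}
  {Oa : ValuationSubring A}

/-- If the residue field is algebraically closed, every extension of degree `n` is contained in `M`
as soon as `M` contains the `n`-th roots of unity and `n`-th roots of representatives of
`vK / n vK`. -/
theorem le_of_isAlgClosed_residueField [IsAlgClosed A] [Algebra.IsAlgebraic K A]
    [IsAlgClosed (IsLocalRing.ResidueField O)]
    (h : Oa.comap (algebraMap K A) = O) (hdef : ValuationSubring.IsDefectless K O)
    (hD : ∀ p : ℕ, p.Prime → ∀ (N : ℕ) (k : K), k ≠ 0 →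
      Oa.valuation (p : A) ^ N ≤ Oa.valuation (algebraMap K A k) →
      Oa.valuation (algebraMap K A k) ≤ 1 →
        ∃ y : K, Oa.valuation (algebraMap K A y) ^ p = Oa.valuation (algebraMap K A k))
    {n : ℕ} (hn : 0 < n) (M : IntermediateField K A) [FiniteDimensional K M]
    (hζ : ∀ ζ : A, ζ ^ n = 1 → ζ ∈ M)
    (hM : ∀ k : K, k ≠ 0 → ∃ q ∈ M, q ≠ 0 ∧ ∃ u : K, Oa.valuation (algebraMap K A u) = 1 ∧
        algebraMap K A k = q ^ n * algebraMap K A u)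
    (L : IntermediateField K A) [FiniteDimensional K L] (hL : Module.finrank K L = n) :
    L ≤ M := by
  have hres := exists_residue_approx_of_isAlgClosed h hdef
  refine le_of_root_conditions h hdef L M (fun u _ hu1 => ?_) (fun u hu hu1 => ?_)
    (fun a _ k hk u hu hu1 hak => ?_)
  · obtain ⟨c, hc⟩ := hres ⟨u, (Oa.valuation_le_one_iff u).mp hu1.le⟩
    exact ⟨_, IntermediateField.algebraMap_mem _ c, hc⟩
  · rw [hL]
    refine exists_pow_eq_of_unit h hdef hres hD L hn hu ?_
    have e : u = 1 + (u - 1) := by ring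
    rw [e, Valuation.map_one_add_of_lt _ hu1]
  · rw [hL] at hak
    obtain ⟨q, hq, hq0, u', hu', hk'⟩ := hM k hk
    obtain ⟨s, hs, hsu⟩ := exists_pow_eq_of_unit h hdef hres hD M hn
      (M.mul_mem (M.algebraMap_mem u') hu.2) (by rw [map_mul, hu', hu1, one_mul])
    have hpow : a ^ n = (q * s) ^ n := by
      rw [hak, hk', mul_pow, hsu]
      ring
    have hs0 : s ≠ 0 := by
      rintro rfl
      have h1 := congrArg Oa.valuation hsu
      rw [zero_pow hn.ne', map_mul, hu', hu1, map_zero, one_mul] at h1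
      exact zero_ne_one h1
    have hqs : q * s ≠ 0 := mul_ne_zero hq0 hs0
    have := hζ (a / (q * s)) (by rw [div_pow, hpow, div_self (pow_ne_zero n hqs)])
    have h2 := M.mul_mem this (M.mul_mem hq hs)
    rwa [div_mul_cancel₀ _ hqs] at h2

/-- Hensel's lemma for `X ^ n - z ^ n` with `n` a unit. -/
theorem mem_of_pow_mem_of_approx [Algebra.IsAlgebraic K A] (h : Oa.comap (algebraMap K A) = O)
    (hdef : ValuationSubring.IsDefectless K O) {n : ℕ} (hn : Oa.valuation (n : A) = 1)
    (E : IntermediateField K A) [FiniteDimensional K E] {z : A} (hz : z ^ n ∈ E)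
    (hz1 : Oa.valuation z = 1) {c : A} (hc : c ∈ E) (hzc : Oa.valuation (z - c) < 1) : z ∈ E := by
  let z' : Oa := ⟨z, (Oa.valuation_le_one_iff z).mp hz1.le⟩
  refine mem_of_simple_root (g := X ^ n - C (z' ^ n)) (z := z') h hdef E (by simp) ?_ ?_ hc hzc
  · simp only [derivative_sub, derivative_X_pow, derivative_C, sub_zero, eval_mul, eval_C, eval_pow,
      eval_X]
    push_cast
    rw [map_mul, hn, map_pow, hz1, one_pow, one_mul]
  · intro x hx
    simp only [derivative_sub, derivative_X_pow, derivative_C, sub_zero, eval_sub, eval_mul, eval_C,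
      eval_pow, eval_X]
    push_cast
    exact ⟨E.sub_mem (pow_mem hx n) hz, E.mul_mem (natCast_mem E n) (pow_mem hx _)⟩

/-- In residue characteristic `0`, a residue which is algebraic over that of `K` has a lift `z` that
is a simple root of a polynomial over `K`. By Hensel's lemma `z` lies in every finite extension on
which that residue is attained. -/
theorem exists_liftable_approx [IsAlgClosed A] [Algebra.IsAlgebraic K A]
    [CharZero (IsLocalRing.ResidueField O)] (h : Oa.comap (algebraMap K A) = O)
    (hdef : ValuationSubring.IsDefectless K O) {u : Oa} {p : (IsLocalRing.ResidueField O)[X]}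
    (hpm : p.Monic) (hirr : Irreducible p)
    (hpu : p.eval₂ (O.residueMap Oa h) (IsLocalRing.residue Oa u) = 0) :
    ∃ z : Oa, Oa.valuation ((u : A) - z) < 1 ∧
      ∀ (E : IntermediateField K A) [FiniteDimensional K E],
        (∃ c ∈ E, Oa.valuation ((u : A) - c) < 1) → (z : A) ∈ E := by
  have hlift : p ∈ lifts (IsLocalRing.residue O) := by
    rw [lifts_iff_coeff_lifts]
    exact fun n => IsLocalRing.residue_surjective _
  obtain ⟨q, hqp, -, hqm⟩ := lifts_and_degree_eq_and_monic hlift hpm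
  have hev : ∀ (r : O[X]) (y : Oa),
      IsLocalRing.residue Oa ((r.map (O.inclusionOfComapEq Oa h)).eval y) =
      (r.map (IsLocalRing.residue O)).eval₂ (O.residueMap Oa h) (IsLocalRing.residue Oa y) := by
    intro r y
    rw [eval_map, hom_eval₂, eval₂_map]
    rfl
  have hmem : ∀ (E : IntermediateField K A) (r : O[X]) (y : Oa), (y : A) ∈ E →
      (((r.map (O.inclusionOfComapEq Oa h)).eval y : Oa) : A) ∈ E := by
    intro E r y hy
    rw [eval_map, eval₂_eq_sum_range]
    push_cast
    exact sum_mem fun i _ => E.mul_mem (E.algebraMap_mem (r.coeff i : K)) (pow_mem hy i)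
  obtain ⟨z, hz0, hz⟩ := exists_root_near (Oa := Oa) (y := u)
      (hqm.map (O.inclusionOfComapEq Oa h)) (by
    rw [← ValuationSubring.valuation_lt_one_iff, ← IsLocalRing.residue_eq_zero_iff, hev, hqp, hpu])
  refine ⟨z, hz, fun E _ ⟨c, hc, huc⟩ => ?_⟩
  refine mem_of_simple_root h hdef E hz0 ?_ (fun y hy => ⟨hmem E q y hy, ?_⟩) hc ?_
  · rw [← ValuationSubring.valuation_eq_one_iff, ← IsLocalRing.residue_ne_zero_iff_isUnit,
      derivative_map, hev, ← derivative_map, hqp, ← (ValuationSubring.residue_eq_iff Oa u z).mpr hz]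
    exact hirr.separable.eval₂_derivative_ne_zero _ hpu
  · rw [derivative_map]
    exact hmem E _ y hy
  · have e : (z : A) - c = (u - c) - (u - z) := by ring
    rw [e]
    exact Valuation.map_sub_lt _ huc hz

/-- If the residue field has characteristic `0`, every extension of degree `n` is contained in `M`
as soon as `M` contains `n`-th roots of representatives of `vK / n vK` and lifts of all residues of
degree at most `n * n`. Roots of unity are obtained from their residues. -/
theorem le_of_isBoundedField_residueField [IsAlgClosed A] [Algebra.IsAlgebraic K A]
    [CharZero (IsLocalRing.ResidueField O)]
    (h : Oa.comap (algebraMap K A) = O) (hdef : ValuationSubring.IsDefectless K O)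
    {n : ℕ} (hn : 0 < n) (M : IntermediateField K A) [FiniteDimensional K M]
    (hres : ∀ (y : Oa) (p : (IsLocalRing.ResidueField O)[X]), p ≠ 0 → p.natDegree ≤ n * n →
        p.eval₂ (O.residueMap Oa h) (IsLocalRing.residue Oa y) = 0 →
          ∃ m ∈ M, Oa.valuation ((y : A) - m) < 1)
    (hM : ∀ k : K, k ≠ 0 → ∃ q ∈ M, q ≠ 0 ∧ ∃ u : K, Oa.valuation (algebraMap K A u) = 1 ∧
        algebraMap K A k = q ^ n * algebraMap K A u)
    (L : IntermediateField K A) [FiniteDimensional K L] (hL : Module.finrank K L = n) :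
    L ≤ M := by
  have hn1 : Oa.valuation (n : A) = 1 := by
    have h1 : Oa.valuation ((n : Oa) : A) = 1 := by
      rw [← ValuationSubring.valuation_eq_one_iff, ← IsLocalRing.residue_ne_zero_iff_isUnit,
        map_natCast, ← map_natCast (O.residueMap Oa h), _root_.map_ne_zero]
      exact Nat.cast_ne_zero.mpr hn.ne'
    simpa using h1
  refine le_of_root_conditions h hdef L M (fun u hu hu1 => ?_) (fun u hu hu1 => ?_)
    (fun a ha k hk u hu hu1 hak => ?_)
  · let u' : Oa := ⟨u, (Oa.valuation_le_one_iff u).mp hu1.le⟩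
    have huu : Oa.valuation ((u' : A) - u) < 1 := by
      rw [show (u' : A) = u from rfl, sub_self, map_zero]
      exact zero_lt_one
    obtain ⟨p, hpm, hirr, hdeg, hpu⟩ := exists_residue_polynomial h hdef L u' hu
    obtain ⟨z, hz, hzE⟩ := exists_liftable_approx h hdef hpm hirr hpu
    refine ⟨z, ⟨hzE L ⟨u, hu, huu⟩, hzE M ?_⟩, hz⟩
    exact hres u' p hpm.ne_zero ((hdeg.trans hL.le).trans (Nat.le_mul_self n)) hpu
  · rw [hL]
    let u' : Oa := 1 + ⟨u - 1, (Oa.valuation_le_one_iff _).mp hu1.le⟩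
    have hu' : (u' : A) = u := by
      change 1 + (u - 1) = u
      ring
    obtain ⟨z, hz0, hz⟩ := exists_root_near (Oa := Oa) (monic_X_pow_sub_C u' hn.ne') (y := 1) (by
      simp only [eval_sub, eval_pow, eval_X, eval_C, one_pow]
      push_cast
      rwa [hu', Oa.valuation.map_sub_swap])
    have hzu : (z : A) ^ n = u := by
      have h1 := congrArg (Subtype.val) hz0
      simp only [eval_sub, eval_pow, eval_X, eval_C] at h1
      push_cast at h1
      rw [hu'] at h1
      exact sub_eq_zero.mp h1
    rw [OneMemClass.coe_one, Oa.valuation.map_sub_swap] at hz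
    refine ⟨z, mem_of_pow_mem_of_approx h hdef hn1 L (hzu ▸ hu) ?_ L.one_mem hz, hzu⟩
    have e : (z : A) = 1 + (z - 1) := by ring
    rw [e, Valuation.map_one_add_of_lt _ hz]
  -- The residue of `a / q` is an `n`-th root of a residue of degree at most `n`, hence has degree
  -- at most `n * n`, and is attained on `M`.
  · rw [hL] at hak
    obtain ⟨q, hq, hq0, κ, hκ, hk'⟩ := hM k hk
    have hpow : (a / q) ^ n = algebraMap K A κ * u := by
      rw [div_pow, hak, hk']
      field_simp
    have hval : Oa.valuation (algebraMap K A κ * u) = 1 := by rw [map_mul, hκ, hu1, one_mul]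
    have hη : Oa.valuation (a / q) = 1 := by
      have : Oa.valuation (a / q) ^ n = 1 := by rw [← map_pow, hpow, hval]
      exact (pow_left_inj₀ zero_le zero_le hn.ne').mp (this.trans (one_pow n).symm)
    let η : Oa := ⟨a / q, (Oa.valuation_le_one_iff _).mp hη.le⟩
    obtain ⟨p, hpm, -, hdeg, hp⟩ := exists_residue_polynomial h hdef L (η ^ n) (by
      push_cast
      rw [hpow]
      exact L.mul_mem (L.algebraMap_mem κ) hu.1)
    obtain ⟨m, hm, hηm⟩ := hres η (expand _ n p) ((expand_ne_zero hn).mpr hpm.ne_zero)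
      (by rw [natDegree_expand]; exact Nat.mul_le_mul_right n (hdeg.trans hL.le))
      (by
        rw [← eval_map, map_expand, expand_eval, eval_map, ← map_pow]
        exact hp)
    have hmem : a / q ∈ M := mem_of_pow_mem_of_approx h hdef hn1 M
      (by rw [hpow]; exact M.mul_mem (M.algebraMap_mem κ) hu.2) hη hm hηm
    have h2 := M.mul_mem hmem hq
    rwa [div_mul_cancel₀ _ hq0] at h2

/-- Only finitely many Galois extensions of `K` lie in a given finite extension `M`: they all lie in
the separable part of `M`, which has a primitive element. -/
theorem finite_setOf_isGalois_le [Algebra.IsAlgebraic K A] (M : IntermediateField K A)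
    [FiniteDimensional K M] :
    {E : IntermediateField K A | IsGalois K E ∧ E ≤ M}.Finite := by
  let M' : IntermediateField K A := M ⊓ separableClosure K A
  have hle : M' ≤ M := inf_le_left
  have hfin : FiniteDimensional K M' :=
    FiniteDimensional.of_injective (IntermediateField.inclusion hle).toLinearMap
      (IntermediateField.inclusion_injective hle)
  have hsep : Algebra.IsSeparable K M' :=
    (le_separableClosure_iff K A M').mp inf_le_right
  have : Finite (IntermediateField K M') :=
    Field.finite_intermediateField_of_exists_primitive_element K M'
      (Field.exists_primitive_element K M')
  refine (Set.finite_range (IntermediateField.lift (F := M'))).subset ?_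
  rintro E ⟨hE, hEM⟩
  have hEM' : E ≤ M' := le_inf hEM (le_separableClosure K A E)
  exact ⟨IntermediateField.restrict hEM', IntermediateField.lift_restrict hEM'⟩

end Uniform

/-- Let `K` be a field with a valuation `v` (whose value group `vK = v(Kˣ)` is here
assumed to be all of `Γ₀ˣ`) such that: (1) `v` is henselian; (2) `(K, v)` is defectless; (3) the
residue field `Kv` is algebraically closed, or has characteristic `0` and is bounded; (4)
`[vK : n(vK)] < ∞` for every positive integer `n`; (5) if `char(Kv) = p > 0` and `char K = 0`
then every `γ ∈ vK` with `-v(p) ≤ γ ≤ v(p)` (multiplicatively: `v(p) ≤ γ ≤ v(p)⁻¹`) lies in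
`p(vK)`, and if `char K = p` then `vK` is `p`-divisible.  Then `K` is bounded. -/
theorem isBoundedField_of_johnson_conditions
    {K : Type u} [Field K] {Γ₀ : Type*} [LinearOrderedCommGroupWithZero Γ₀]
    (v : Valuation K Γ₀) (hsurj : ∀ γ : Γ₀ˣ, ∃ x : Kˣ, v (x : K) = (γ : Γ₀))
    (h1 : HenselianLocalRing v.valuationSubring)
    (h2 : ValuationSubring.IsDefectless K v.valuationSubring)
    (h3 : IsAlgClosed (IsLocalRing.ResidueField v.valuationSubring) ∨
      (CharZero (IsLocalRing.ResidueField v.valuationSubring) ∧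
        IsBoundedField (IsLocalRing.ResidueField v.valuationSubring)))
    (h4 : ∀ n : ℕ, 0 < n → Finite (Γ₀ˣ ⧸ (powMonoidHom n : Γ₀ˣ →* Γ₀ˣ).range))
    (h5 : ∀ p : ℕ, 0 < p → CharP (IsLocalRing.ResidueField v.valuationSubring) p →
      (CharZero K →
        ∀ γ : Γ₀ˣ, v ((p : K)) ≤ (γ : Γ₀) → (γ : Γ₀) ≤ (v ((p : K)))⁻¹ →
          ∃ δ : Γ₀ˣ, δ ^ p = γ) ∧
      (CharP K p → ∀ γ : Γ₀ˣ, ∃ δ : Γ₀ˣ, δ ^ p = γ)) :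
    IsBoundedField K := by
  obtain ⟨Oa, h⟩ := v.valuationSubring.exists_comap_eq (A := AlgebraicClosure K)
  have hle : ∀ x y : K, Oa.valuation (algebraMap K _ x) ≤ Oa.valuation (algebraMap K _ y) ↔
      v x ≤ v y := by
    intro x y
    rw [← ValuationSubring.comap_valuation_le_iff, h]
    exact (v.isEquiv_valuation_valuationSubring x y).symm
  have heq : ∀ x y : K, Oa.valuation (algebraMap K _ x) = Oa.valuation (algebraMap K _ y) ↔
      v x = v y := by
    intro x y
    rw [le_antisymm_iff, le_antisymm_iff, hle, hle]
  intro n hn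
  -- one finite extension `M` contains all extensions of degree `n`
  suffices H : ∃ M : IntermediateField K (AlgebraicClosure K), FiniteDimensional K M ∧
      ∀ L : IntermediateField K (AlgebraicClosure K), FiniteDimensional K L →
        Module.finrank K L = n → L ≤ M by
    obtain ⟨M, hM, hLM⟩ := H
    refine (finite_setOf_isGalois_le M).subset fun E hE => ⟨hE.1, hLM E ?_ hE.2⟩
    exact Module.finite_of_finrank_pos (hE.2 ▸ hn)
  obtain ⟨M, hMfin, hζ, hM⟩ := exists_root_field (A := AlgebraicClosure K) v hsurj hn (h4 n hn)
  have hM' : ∀ k : K, k ≠ 0 → ∃ q ∈ M, q ≠ 0 ∧ ∃ u : K, Oa.valuation (algebraMap K _ u) = 1 ∧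
      algebraMap K _ k = q ^ n * algebraMap K _ u := by
    intro k hk
    obtain ⟨q, hq, hq0, u, hu, e⟩ := hM k hk
    refine ⟨q, hq, hq0, u, ?_, e⟩
    have := (heq u 1).mpr (by rw [hu, map_one])
    rwa [map_one, map_one] at this
  rcases h3 with hk | ⟨hk0, hk⟩
  · refine ⟨M, hMfin, fun L _ hL => le_of_isAlgClosed_residueField h h2 ?_ hn M hζ hM' L hL⟩
    intro p hp N k hk0 hpk hk1
    rw [← map_natCast (algebraMap K (AlgebraicClosure K)), ← map_pow, ← map_pow, hle,
      map_pow] at hpk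
    rw [← map_one Oa.valuation, ← map_one (algebraMap K (AlgebraicClosure K)), hle,
      map_one] at hk1
    obtain ⟨y, hy⟩ := exists_pow_eq_of_johnson v hsurj h5 hp N hk0 hpk hk1
    refine ⟨y, ?_⟩
    rw [← map_pow, ← map_pow, heq, map_pow, hy]
  · obtain ⟨M₁, hM₁fin, hM₁⟩ := exists_residue_approx_of_isBoundedField hk h (n * n)
    refine ⟨M ⊔ M₁, inferInstance, fun L _ hL =>
      le_of_isBoundedField_residueField h h2 hn (M ⊔ M₁) ?_ ?_ L hL⟩
    · intro y p hp hpn hpy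
      obtain ⟨m, hm, hym⟩ := hM₁ y p hp hpn hpy
      exact ⟨m, (le_sup_right : M₁ ≤ M ⊔ M₁) hm, hym⟩
    · intro k hk
      obtain ⟨q, hq, hq'⟩ := hM' k hk
      exact ⟨q, (le_sup_left : M ≤ M ⊔ M₁) hq, hq'⟩
end
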